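/- arXiv:0710.4234 — 5 statements merged into one kernel-verified Lean document; each statement's English description precedes it below -/
import Mathlib

section
/- Let p : ℝ × ℝ → [0, ∞) be a measurable transition density (∫_ℝ p(x, u) du = 1 for every x), and let π be an everywhere positive probability density on ℝ with respect to which the chain is reversible: π(x)·p(x, u) = π(u)·p(u, x) for all x, u. Let P be the associated Markov kernel, P(x, A) = ∫_A p(x, u) du, with n-step kernel Pⁿ, and let Π be the probability measure with density π (which is stationary for P). Assume P is Π-irreducible: for every x ∈ ℝ and every Borel set A with Π(A) > 0 there is n ≥ 1 with Pⁿ(x, A) > 0. Suppose there is a continuous, everywhere positive probability density q on ℝ, symmetric about 0, such that for every z ∈ ℝ, lim_{|x| → ∞} p(x, x + z) = q(z). Then the chain is not geometrically ergodic: there do not exist r ∈ [0,1) and a function M : ℝ → [0,∞) such that for every x₀ ∈ ℝ and every n ≥ 1, ‖Pⁿ(x₀, ·) − Π‖_TV ≤ M(x₀)·rⁿ. -/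
open MeasureTheory Filter Set

noncomputable section

/-- `n`-step transition density built from a one-step transition density `p`
(for `n ≥ 1`; the value at `n = 0` is unused). -/
def iterDens (p : ℝ → ℝ → ℝ) : ℕ → ℝ → ℝ → ℝ
  | 0, _, _ => 0
  | 1, x, u => p x u
  | (n + 2), x, u => ∫ v, iterDens p (n + 1) x v * p v u

/-!
Let `P` be the chain and `Π` the measure with density `π`. Suppose `P` converges at rate `r`, with
a uniform constant, from every point of a set `A` on which `π` is bounded below. For bounded `g`
supported on `A`, the covariances `cov(g, Pⁿg)` under `Π` are then `O(rⁿ)`. Reversibility and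
Cauchy–Schwarz give `cov(g, Pᵐg)² ≤ Var(g) cov(g, P²ᵐg)`, so if `cov(g, Pg)` exceeded `r Var(g)`,
iterating over `m = 2ᵏ` would contradict that decay. Hence `⟨g, Pg⟩ ≤ (r + Π(A)) ‖g‖²`, the term
`Π(A)` bounding the contribution of the mean of `g`.

For `g = 1_A / √π` detailed balance turns this into
`∫∫_{A × A} √(p(x, u) p(u, x)) dx du ≤ (r + Π(A)) |A|`, an inequality free of the convergence
constant, which therefore holds for every measurable `A`. Take `A = [n, n + L]` and let `n → ∞`:
by Fatou's lemma `∫∫_{[0, L]²} √(q(t - s) q(s - t)) ds dt ≤ r L`. Dividing by `L → ∞` gives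
`∫ √(q(z) q(-z)) dz ≤ r < 1`, but for symmetric `q` this integral is `∫ q = 1`.
-/

open ProbabilityTheory
open scoped ENNReal

lemma le_mul_of_sq_le_mul_of_le_geometric {b : ℕ → ℝ} {V C r : ℝ} (hr : 0 ≤ r) (hV : 0 ≤ V)
    (hsq : ∀ m, b m ^ 2 ≤ V * b (2 * m)) (hgeom : ∀ m, 1 ≤ m → b m ≤ C * r ^ m) :
    b 1 ≤ r * V := by
  rcases hV.eq_or_lt with rfl | hV
  · nlinarith [hsq 1]
  by_contra! hlt
  set t := b 1 / V
  have hrt : r < t := (lt_div_iff₀ hV).2 hlt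
  have ht : 0 < t := hr.trans_lt hrt
  have growth (k : ℕ) : t ^ (2 ^ k) * V ≤ b (2 ^ k) := by
    induction k with
    | zero => simp [t, hV.ne']
    | succ k ih =>
      refine le_of_mul_le_mul_left ?_ hV
      calc V * (t ^ (2 ^ (k + 1)) * V) = (t ^ (2 ^ k) * V) ^ 2 := by ring
        _ ≤ b (2 ^ k) ^ 2 := by gcongr
        _ ≤ V * b (2 ^ (k + 1)) := pow_succ' 2 k ▸ hsq (2 ^ k)
  have decay (k : ℕ) : V ≤ C * (r / t) ^ (2 ^ k) := by
    rw [div_pow, ← mul_div_assoc, le_div_iff₀ (by positivity), mul_comm]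
    exact (growth k).trans (hgeom _ Nat.one_le_two_pow)
  have hlim : Tendsto (fun k : ℕ => C * (r / t) ^ (2 ^ k)) atTop (nhds (C * 0)) :=
    ((tendsto_pow_atTop_nhds_zero_of_lt_one (by positivity) ((div_lt_one ht).2 hrt)).comp
      (tendsto_pow_atTop_atTop_of_one_lt one_lt_two)).const_mul C
  linarith [ge_of_tendsto' hlim decay]

section L2

variable {α : Type*} {mα : MeasurableSpace α} {μ : Measure α} {f g : α → ℝ}

lemma sq_integral_mul_le (hf : MemLp f 2 μ) (hg : MemLp g 2 μ) :
    (∫ x, f x * g x ∂μ) ^ 2 ≤ (∫ x, f x ^ 2 ∂μ) * ∫ x, g x ^ 2 ∂μ := by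
  have inner_toLp {f g : α → ℝ} (hf : MemLp f 2 μ) (hg : MemLp g 2 μ) :
      inner ℝ (hf.toLp f) (hg.toLp g) = ∫ x, f x * g x ∂μ := by
    refine integral_congr_ae ?_
    filter_upwards [hf.coeFn_toLp, hg.coeFn_toLp] with x hfx hgx
    simp [hfx, hgx, mul_comm]
  simpa only [inner_toLp, ← sq] using real_inner_mul_inner_self_le (hf.toLp f) (hg.toLp g)

lemma covariance_congr_right {g' : α → ℝ} (hg : g =ᵐ[μ] g') : cov[f, g; μ] = cov[f, g'; μ] := by
  rw [covariance, covariance, integral_congr_ae hg]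
  refine integral_congr_ae ?_
  filter_upwards [hg] with x hx
  rw [hx]

lemma sq_covariance_le [IsProbabilityMeasure μ] (hf : MemLp f 2 μ) (hg : MemLp g 2 μ) :
    cov[f, g; μ] ^ 2 ≤ Var[f; μ] * Var[g; μ] := by
  rw [variance_eq_integral hf.aemeasurable, variance_eq_integral hg.aemeasurable]
  exact sq_integral_mul_le (hf.sub (memLp_const _)) (hg.sub (memLp_const _))

lemma covariance_le_of_abs_sub_le [IsProbabilityMeasure μ] (hf : MemLp f 2 μ) (hg : MemLp g 2 μ)
    {c : ℝ} (hc : ∀ x, f x ≠ 0 → |g x - μ[g]| ≤ c) : cov[f, g; μ] ≤ (∫ x, |f x| ∂μ) * c := by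
  have hfi := hf.integrable one_le_two
  calc cov[f, g; μ] = ∫ x, f x * (g x - μ[g]) ∂μ := by
        rw [covariance_eq_sub hf hg, ← integral_mul_const,
          ← integral_sub (hf.integrable_mul hg) (hfi.mul_const _)]
        simp only [Pi.mul_apply, mul_sub]
    _ ≤ ∫ x, |f x| * c ∂μ := by
        refine (Real.le_norm_self _).trans
          (norm_integral_le_of_norm_le (hfi.abs.mul_const c) (.of_forall fun x => ?_))
        by_cases hx : f x = 0
        · simp [hx]
        · rw [norm_mul, Real.norm_eq_abs, Real.norm_eq_abs]
          gcongr
          exact hc x hx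
    _ = (∫ x, |f x| ∂μ) * c := integral_mul_const c _

lemma sq_integral_le_measureReal_support_mul [IsFiniteMeasure μ] (hf : MemLp f 2 μ) :
    (∫ x, f x ∂μ) ^ 2 ≤ μ.real f.support * ∫ x, f x ^ 2 ∂μ := by
  have hS : NullMeasurableSet f.support μ := hf.aestronglyMeasurable.nullMeasurableSet_support
  set u : α → ℝ := f.support.indicator 1
  have hu : MemLp u 2 μ :=
    .of_bound (aestronglyMeasurable_one.indicator₀ hS) 1
      (.of_forall fun x => by by_cases hx : x ∈ f.support <;> simp [u, hx])
  calc (∫ x, f x ∂μ) ^ 2 = (∫ x, u x * f x ∂μ) ^ 2 := by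
        congr! 3 with x
        by_cases hx : f x = 0 <;> simp [u, hx]
    _ ≤ (∫ x, u x ^ 2 ∂μ) * ∫ x, f x ^ 2 ∂μ := sq_integral_mul_le hu hf
    _ = μ.real f.support * ∫ x, f x ^ 2 ∂μ := by
        have hu_sq : (fun x => u x ^ 2) = u := by
          ext x
          by_cases hx : f x = 0 <;> simp [u, hx]
        rw [hu_sq, integral_indicator₀ hS]
        simp

end L2

section ReversibleKernel

variable {α : Type*} {mα : MeasurableSpace α} {κ η : Kernel α α} {μ : Measure α}

instance isMarkovKernel_pow [IsMarkovKernel κ] (n : ℕ) : IsMarkovKernel (κ ^ n) := by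
  induction n with
  | zero => exact inferInstanceAs (IsMarkovKernel Kernel.id)
  | succ n ih => exact inferInstanceAs (IsMarkovKernel ((κ ^ n) ∘ₖ κ))

lemma map_swap_compProd [IsFiniteMeasure μ] [IsFiniteKernel κ] (hκ : κ.IsReversible μ) :
    (μ ⊗ₘ κ).map Prod.swap = μ ⊗ₘ κ := by
  refine Measure.ext_prod fun {s t} hs ht => ?_
  rw [Measure.map_apply measurable_swap (hs.prod ht), preimage_swap_prod,
    Measure.compProd_apply_prod ht hs, Measure.compProd_apply_prod hs ht, hκ ht hs]

lemma lintegral_mul_lintegral_comm [IsFiniteMeasure μ] [IsFiniteKernel κ]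
    (hκ : κ.IsReversible μ) {f g : α → ℝ≥0∞} (hf : Measurable f) (hg : Measurable g) :
    ∫⁻ x, f x * ∫⁻ y, g y ∂κ x ∂μ = ∫⁻ x, g x * ∫⁻ y, f y ∂κ x ∂μ := by
  have flow {f g : α → ℝ≥0∞} (hf : Measurable f) (hg : Measurable g) :
      ∫⁻ x, f x * ∫⁻ y, g y ∂κ x ∂μ = ∫⁻ z, f z.1 * g z.2 ∂(μ ⊗ₘ κ) := by
    rw [Measure.lintegral_compProd (by fun_prop)]
    exact lintegral_congr fun x => (lintegral_const_mul _ hg).symm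
  rw [flow hf hg, flow hg hf, ← map_swap_compProd hκ, lintegral_map (by fun_prop) measurable_swap,
    map_swap_compProd hκ]
  simp only [Prod.fst_swap, Prod.snd_swap, mul_comm]

lemma isReversible_mul [IsFiniteMeasure μ] [IsFiniteKernel κ] [IsFiniteKernel η]
    (hκ : κ.IsReversible μ) (hη : η.IsReversible μ) (hcomm : Commute κ η) :
    (κ * η).IsReversible μ := by
  have flow {κ η : Kernel α α} {A B : Set α} (hA : MeasurableSet A) (hB : MeasurableSet B) :
      ∫⁻ x in A, (κ * η) x B ∂μ = ∫⁻ x, A.indicator 1 x * ∫⁻ y, κ y B ∂η x ∂μ := by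
    rw [← lintegral_indicator hA]
    refine lintegral_congr fun x => ?_
    by_cases hx : x ∈ A
    · simp only [hx, indicator_of_mem, Pi.one_apply, one_mul]
      exact Kernel.comp_apply' κ η x hB
    · simp [hx]
  intro A B hA hB
  calc ∫⁻ x in A, (κ * η) x B ∂μ
      = ∫⁻ x, A.indicator 1 x * ∫⁻ y, κ y B ∂η x ∂μ := flow hA hB
    _ = ∫⁻ x, κ x B * ∫⁻ y, A.indicator 1 y ∂η x ∂μ :=
        lintegral_mul_lintegral_comm hη (measurable_one.indicator hA) (κ.measurable_coe hB)
    _ = ∫⁻ x, η x A * ∫⁻ y, B.indicator 1 y ∂κ x ∂μ := by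
        simp only [lintegral_indicator_one, hA, hB, mul_comm]
    _ = ∫⁻ x, B.indicator 1 x * ∫⁻ y, η y A ∂κ x ∂μ :=
        lintegral_mul_lintegral_comm hκ (η.measurable_coe hA) (measurable_one.indicator hB)
    _ = ∫⁻ x in B, (κ * η) x A ∂μ := by rw [hcomm.eq, flow hB hA]

variable [IsProbabilityMeasure μ] [IsMarkovKernel κ] {f g : α → ℝ}

lemma isReversible_pow (hκ : κ.IsReversible μ) (n : ℕ) : (κ ^ n).IsReversible μ := by
  induction n with
  | zero =>
    intro A B hA hB
    simp [show (1 : Kernel α α) = Kernel.id from rfl, Kernel.id_apply, hA, hB, inter_comm]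
  | succ n ih => exact pow_succ κ n ▸ isReversible_mul ih hκ (Commute.pow_self κ n)

lemma measurePreserving_snd_compProd (hκ : κ.Invariant μ) :
    MeasurePreserving Prod.snd (μ ⊗ₘ κ) μ :=
  ⟨measurable_snd, (Measure.snd_compProd μ κ).trans hκ.def⟩

lemma integral_integral_kernel (hκ : κ.Invariant μ) (hf : Integrable f μ) :
    ∫ x, ∫ y, f y ∂κ x ∂μ = ∫ x, f x ∂μ := by
  have hsnd := measurePreserving_snd_compProd hκ
  calc ∫ x, ∫ y, f y ∂κ x ∂μ
      = ∫ z, f z.2 ∂(μ ⊗ₘ κ) :=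
        (Measure.integral_compProd (hsnd.integrable_comp_of_integrable hf)).symm
    _ = ∫ x, f x ∂(μ ⊗ₘ κ).map Prod.snd :=
        (integral_map hsnd.aemeasurable (hsnd.map_eq.symm ▸ hf.aestronglyMeasurable)).symm
    _ = ∫ x, f x ∂μ := by rw [hsnd.map_eq]

lemma memLp_two_integral_kernel (hκ : κ.Invariant μ) (hf : MemLp f 2 μ) :
    MemLp (fun x => ∫ y, f y ∂κ x) 2 μ := by
  have hf₂ : MemLp (Function.uncurry fun _ : α => f) 2 (μ ⊗ₘ κ) :=
    hf.comp_measurePreserving (measurePreserving_snd_compProd hκ)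
  have hmeas : AEStronglyMeasurable (fun x => ∫ y, f y ∂κ x) μ :=
    hf₂.aestronglyMeasurable.integral_kernel_compProd
  obtain ⟨hsq_ae, hsq⟩ :=
    (Measure.integrable_compProd_iff hf₂.integrable_sq.aestronglyMeasurable).1 hf₂.integrable_sq
  refine (memLp_two_iff_integrable_sq hmeas).2 (hsq.mono' (hmeas.pow 2) ?_)
  filter_upwards [hsq_ae, AEStronglyMeasurable.ae_of_compProd hf₂.aestronglyMeasurable]
    with x hx hfx
  have hvar := variance_nonneg f (κ x)
  rw [variance_eq_sub ((memLp_two_iff_integrable_sq hfx).2 hx)] at hvar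
  simpa using hvar

lemma integral_mul_integral_comm (hκ : κ.IsReversible μ) (hf : MemLp f 2 μ) (hg : MemLp g 2 μ) :
    ∫ x, f x * ∫ y, g y ∂κ x ∂μ = ∫ x, (∫ y, f y ∂κ x) * g x ∂μ := by
  have hfst : MeasurePreserving Prod.fst (μ ⊗ₘ κ) μ := ⟨measurable_fst, Measure.fst_compProd μ κ⟩
  have hsnd := measurePreserving_snd_compProd hκ.invariant
  have flow {f g : α → ℝ} (hf : MemLp f 2 μ) (hg : MemLp g 2 μ) :
      ∫ x, f x * ∫ y, g y ∂κ x ∂μ = ∫ z, f z.1 * g z.2 ∂(μ ⊗ₘ κ) := by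
    have hint : Integrable (fun z => f z.1 * g z.2) (μ ⊗ₘ κ) :=
      (hf.comp_measurePreserving hfst).integrable_mul (hg.comp_measurePreserving hsnd)
    rw [Measure.integral_compProd hint]
    simp only [integral_const_mul]
  calc ∫ x, f x * ∫ y, g y ∂κ x ∂μ
      = ∫ z, f z.1 * g z.2 ∂(μ ⊗ₘ κ) := flow hf hg
    _ = ∫ z, f z.2 * g z.1 ∂(μ ⊗ₘ κ).map Prod.swap :=
        (integral_map_equiv MeasurableEquiv.prodComm fun z => f z.2 * g z.1).symm
    _ = ∫ x, (∫ y, f y ∂κ x) * g x ∂μ := by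
        simp only [map_swap_compProd hκ, mul_comm, flow hg hf]

lemma covariance_integral_comm (hκ : κ.IsReversible μ) (hf : MemLp f 2 μ) (hg : MemLp g 2 μ) :
    cov[f, fun x => ∫ y, g y ∂κ x; μ] = cov[fun x => ∫ y, f y ∂κ x, g; μ] := by
  have hinv := hκ.invariant
  rw [covariance_eq_sub hf (memLp_two_integral_kernel hinv hg),
    covariance_eq_sub (memLp_two_integral_kernel hinv hf) hg,
    integral_integral_kernel hinv (hf.integrable one_le_two),
    integral_integral_kernel hinv (hg.integrable one_le_two)]
  exact congrArg (· - _) (integral_mul_integral_comm hκ hf hg)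

lemma ae_integral_pow_add (hκ : κ.IsReversible μ) (hf : Integrable f μ) (m n : ℕ) :
    ∀ᵐ x ∂μ, ∫ y, f y ∂(κ ^ (m + n)) x = ∫ y, ∫ z, f z ∂(κ ^ m) y ∂(κ ^ n) x := by
  have hinv := (isReversible_pow hκ (m + n)).invariant
  filter_upwards [Measure.ae_integrable_of_integrable_comp (hinv.def.symm ▸ hf)] with x hx
  rw [pow_add] at hx ⊢
  exact Kernel.integral_comp hx

lemma sq_covariance_pow_le (hκ : κ.IsReversible μ) (hg : MemLp g 2 μ) (m : ℕ) :
    cov[g, fun x => ∫ y, g y ∂(κ ^ m) x; μ] ^ 2 ≤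
      Var[g; μ] * cov[g, fun x => ∫ y, g y ∂(κ ^ (2 * m)) x; μ] := by
  have hm := isReversible_pow hκ m
  have hκg := memLp_two_integral_kernel hm.invariant hg
  calc cov[g, fun x => ∫ y, g y ∂(κ ^ m) x; μ] ^ 2
      ≤ Var[g; μ] * Var[fun x => ∫ y, g y ∂(κ ^ m) x; μ] := sq_covariance_le hg hκg
    _ = Var[g; μ] * cov[g, fun x => ∫ y, ∫ z, g z ∂(κ ^ m) y ∂(κ ^ m) x; μ] := by
        rw [covariance_integral_comm hm hg hκg, covariance_self hκg.aemeasurable]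
    _ = Var[g; μ] * cov[g, fun x => ∫ y, g y ∂(κ ^ (2 * m)) x; μ] := by
        rw [two_mul, covariance_congr_right (ae_integral_pow_add hκ (hg.integrable one_le_two) m m)]

lemma covariance_integral_le_mul_variance (hκ : κ.IsReversible μ) (hg : MemLp g 2 μ) {C r : ℝ}
    (hr : 0 ≤ r)
    (hgeom : ∀ n, 1 ≤ n → cov[g, fun x => ∫ y, g y ∂(κ ^ n) x; μ] ≤ C * r ^ n) :
    cov[g, fun x => ∫ y, g y ∂κ x; μ] ≤ r * Var[g; μ] := by
  have h := le_mul_of_sq_le_mul_of_le_geometric hr (variance_nonneg g μ)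
    (sq_covariance_pow_le hκ hg) hgeom
  rwa [pow_one] at h

lemma integral_mul_integral_le_of_geometric (hκ : κ.IsReversible μ) (hg : MemLp g 2 μ)
    {K r : ℝ} (hr : 0 ≤ r)
    (hgeom : ∀ x, g x ≠ 0 → ∀ n, 1 ≤ n → |∫ y, g y ∂(κ ^ n) x - ∫ y, g y ∂μ| ≤ K * r ^ n) :
    ∫ x, g x * ∫ y, g y ∂κ x ∂μ ≤ (r + μ.real g.support) * ∫ x, g x ^ 2 ∂μ := by
  have hgi := hg.integrable one_le_two
  have hcov (n : ℕ) (hn : 1 ≤ n) :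
      cov[g, fun x => ∫ y, g y ∂(κ ^ n) x; μ] ≤ ((∫ x, |g x| ∂μ) * K) * r ^ n := by
    have hinv := (isReversible_pow hκ n).invariant
    rw [mul_assoc]
    refine covariance_le_of_abs_sub_le hg (memLp_two_integral_kernel hinv hg) fun x hx => ?_
    rw [integral_integral_kernel hinv hgi]
    exact hgeom x hx n hn
  calc ∫ x, g x * ∫ y, g y ∂κ x ∂μ
      = cov[g, fun x => ∫ y, g y ∂κ x; μ] + (∫ x, g x ∂μ) ^ 2 := by
        rw [covariance_eq_sub hg (memLp_two_integral_kernel hκ.invariant hg),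
          integral_integral_kernel hκ.invariant hgi, ← sq, sub_add_cancel]
        rfl
    _ ≤ r * Var[g; μ] + (∫ x, g x ∂μ) ^ 2 := by
        gcongr
        exact covariance_integral_le_mul_variance hκ hg hr hcov
    _ ≤ r * ∫ x, g x ^ 2 ∂μ + μ.real g.support * ∫ x, g x ^ 2 ∂μ := by
        gcongr
        · exact variance_le_expectation_sq hg.aestronglyMeasurable
        · exact sq_integral_le_measureReal_support_mul hg
    _ = (r + μ.real g.support) * ∫ x, g x ^ 2 ∂μ := by ring

lemma lintegral_mul_lintegral_le_of_geometric (hκ : κ.IsReversible μ) (hg : MemLp g 2 μ)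
    (hg_nonneg : 0 ≤ g) {K r : ℝ} (hr : 0 ≤ r)
    (hgeom : ∀ x, g x ≠ 0 → ∀ n, 1 ≤ n → |∫ y, g y ∂(κ ^ n) x - ∫ y, g y ∂μ| ≤ K * r ^ n) :
    ∫⁻ x, .ofReal (g x) * ∫⁻ y, .ofReal (g y) ∂κ x ∂μ ≤
      (.ofReal r + μ g.support) * ∫⁻ x, .ofReal (g x ^ 2) ∂μ := by
  have hgκ : Integrable g (κ ∘ₘ μ) := hκ.invariant.def.symm ▸ hg.integrable one_le_two
  calc ∫⁻ x, .ofReal (g x) * ∫⁻ y, .ofReal (g y) ∂κ x ∂μ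
      = ∫⁻ x, .ofReal (g x * ∫ y, g y ∂κ x) ∂μ := by
        refine lintegral_congr_ae ?_
        filter_upwards [Measure.ae_integrable_of_integrable_comp hgκ] with x hx
        rw [ENNReal.ofReal_mul (hg_nonneg x),
          ofReal_integral_eq_lintegral_ofReal hx (.of_forall hg_nonneg)]
    _ = .ofReal (∫ x, g x * ∫ y, g y ∂κ x ∂μ) :=
        (ofReal_integral_eq_lintegral_ofReal
          (hg.integrable_mul (memLp_two_integral_kernel hκ.invariant hg))
          (.of_forall fun x => mul_nonneg (hg_nonneg x) (integral_nonneg hg_nonneg))).symm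
    _ ≤ .ofReal ((r + μ.real g.support) * ∫ x, g x ^ 2 ∂μ) :=
        ENNReal.ofReal_le_ofReal (integral_mul_integral_le_of_geometric hκ hg hr hgeom)
    _ = (.ofReal r + μ g.support) * ∫⁻ x, .ofReal (g x ^ 2) ∂μ := by
        rw [ENNReal.ofReal_mul (by positivity), ENNReal.ofReal_add hr measureReal_nonneg,
          ofReal_measureReal, ofReal_integral_eq_lintegral_ofReal hg.integrable_sq
            (.of_forall fun x => sq_nonneg (g x))]

end ReversibleKernel

section Density

variable {α : Type*} {mα : MeasurableSpace α} {ν : Measure α}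

/-- The measure with density `a` with respect to `ν`. Negative values of `a` are truncated to `0`,
so this is meaningful for `0 ≤ a`. -/
def densityMeasure (ν : Measure α) (a : α → ℝ) : Measure α :=
  ν.withDensity fun x => .ofReal (a x)

lemma lintegral_densityMeasure {a : α → ℝ} (ha : AEMeasurable a ν) (f : α → ℝ≥0∞) :
    ∫⁻ x, f x ∂densityMeasure ν a = ∫⁻ x, .ofReal (a x) * f x ∂ν :=
  lintegral_withDensity_eq_lintegral_mul_non_measurable₀ ν ha.ennreal_ofReal
    (.of_forall fun _ => ENNReal.ofReal_lt_top) f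

lemma integral_densityMeasure {a : α → ℝ} (ha : AEMeasurable a ν) (ha_nonneg : 0 ≤ a)
    (f : α → ℝ) : ∫ x, f x ∂densityMeasure ν a = ∫ x, a x * f x ∂ν := by
  rw [densityMeasure, integral_withDensity_eq_integral_toReal_smul₀ ha.ennreal_ofReal
    (.of_forall fun _ => ENNReal.ofReal_lt_top)]
  simp only [ENNReal.toReal_ofReal (ha_nonneg _), smul_eq_mul]

lemma densityMeasure_univ (a : α → ℝ) :
    densityMeasure ν a univ = ∫⁻ x, .ofReal (a x) ∂ν := by
  rw [densityMeasure, withDensity_apply _ .univ, Measure.restrict_univ]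

lemma restrict_densityMeasure {a : α → ℝ} {s : Set α} (hs : MeasurableSet s) :
    (densityMeasure ν a).restrict s = densityMeasure (ν.restrict s) a :=
  restrict_withDensity hs _

lemma isProbabilityMeasure_densityMeasure {a : α → ℝ} (ha_nonneg : 0 ≤ a)
    (ha : ∫ x, a x ∂ν = 1) : IsProbabilityMeasure (densityMeasure ν a) := by
  have hint : Integrable a ν := .of_integral_ne_zero (by simp [ha])
  constructor
  rw [densityMeasure_univ, ← ofReal_integral_eq_lintegral_ofReal hint (.of_forall ha_nonneg), ha,
    ENNReal.ofReal_one]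

lemma abs_integral_densityMeasure_sub_le {a b g : α → ℝ} {C : ℝ} (ha : Integrable a ν)
    (hb : Integrable b ν) (ha_nonneg : 0 ≤ a) (hb_nonneg : 0 ≤ b) (hg : AEStronglyMeasurable g ν)
    (hgC : ∀ x, |g x| ≤ C) :
    |∫ x, g x ∂densityMeasure ν a - ∫ x, g x ∂densityMeasure ν b| ≤ C * ∫ x, |a x - b x| ∂ν := by
  have hgC' : ∀ᵐ x ∂ν, ‖g x‖ ≤ C := .of_forall hgC
  rw [integral_densityMeasure ha.aemeasurable ha_nonneg,
    integral_densityMeasure hb.aemeasurable hb_nonneg,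
    ← integral_sub (ha.mul_bdd hg hgC') (hb.mul_bdd hg hgC'), ← integral_const_mul]
  rw [← Real.norm_eq_abs]
  refine norm_integral_le_of_norm_le ((ha.sub hb).abs.const_mul C) (.of_forall fun x => ?_)
  rw [← sub_mul, norm_mul, mul_comm]
  exact mul_le_mul_of_nonneg_right (hgC x) (norm_nonneg _)

/-- A family of probability densities `p x` with respect to `ν`, measurable jointly in the starting
point and the end point. -/
structure IsTransitionDensity (ν : Measure α) (p : α → α → ℝ) : Prop where
  measurable : Measurable (Function.uncurry p)
  nonneg : ∀ x u, 0 ≤ p x u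
  integral_eq_one : ∀ x, ∫ u, p x u ∂ν = 1

/-- The one-step kernel of the chain with transition density `p` with respect to `ν`. It is `0`
unless `p` is jointly measurable. -/
def densityKernel (ν : Measure α) [SFinite ν] (p : α → α → ℝ) : Kernel α α :=
  (Kernel.const α ν).withDensity fun x u => .ofReal (p x u)

namespace IsTransitionDensity

variable {p : α → α → ℝ}

lemma integrable (hp : IsTransitionDensity ν p) (x : α) : Integrable (p x) ν :=
  .of_integral_ne_zero (by simp [hp.integral_eq_one])

lemma aemeasurable_mul (hp : IsTransitionDensity ν p) {a : α → ℝ} (ha : AEMeasurable a ν) :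
    AEMeasurable (Function.uncurry fun x u => a x * p x u) (ν.prod ν) :=
  (ha.comp_quasiMeasurePreserving Measure.quasiMeasurePreserving_fst).mul hp.measurable.aemeasurable

variable [SFinite ν]

lemma densityKernel_apply (hp : IsTransitionDensity ν p) (x : α) :
    densityKernel ν p x = densityMeasure ν (p x) := by
  rw [densityKernel, Kernel.withDensity_apply _ hp.measurable.ennreal_ofReal, Kernel.const_apply,
    densityMeasure]

lemma densityKernel_apply' (hp : IsTransitionDensity ν p) (x : α) {s : Set α}
    (hs : MeasurableSet s) : densityKernel ν p x s = ∫⁻ u in s, .ofReal (p x u) ∂ν := by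
  rw [hp.densityKernel_apply, densityMeasure, withDensity_apply _ hs]

lemma isMarkovKernel_densityKernel (hp : IsTransitionDensity ν p) :
    IsMarkovKernel (densityKernel ν p) := by
  refine ⟨fun x => ?_⟩
  rw [hp.densityKernel_apply]
  exact isProbabilityMeasure_densityMeasure (hp.nonneg x) (hp.integral_eq_one x)

lemma ofReal_mul_densityKernel_apply (hp : IsTransitionDensity ν p) {c : ℝ} (hc : 0 ≤ c) (x : α)
    {s : Set α} (hs : MeasurableSet s) :
    .ofReal c * densityKernel ν p x s = ∫⁻ u in s, .ofReal (c * p x u) ∂ν := by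
  simp only [hp.densityKernel_apply' x hs, ENNReal.ofReal_mul hc]
  exact (lintegral_const_mul _ (hp.measurable.of_uncurry_left.ennreal_ofReal)).symm

lemma integrable_mul (hp : IsTransitionDensity ν p) {a : α → ℝ} (ha : Integrable a ν) :
    Integrable (Function.uncurry fun x u => a x * p x u) (ν.prod ν) := by
  refine (integrable_prod_iff (hp.aemeasurable_mul ha.aemeasurable).aestronglyMeasurable).2
    ⟨.of_forall fun x => (hp.integrable x).const_mul (a x), ha.norm.congr (.of_forall fun x => ?_)⟩
  simp only [Function.uncurry_apply_pair, norm_mul, integral_const_mul,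
    Real.norm_of_nonneg (hp.nonneg _ _), hp.integral_eq_one, mul_one]

lemma isReversible_densityKernel (hp : IsTransitionDensity ν p) {π : α → ℝ} (hπ : AEMeasurable π ν)
    (hπ_nonneg : 0 ≤ π) (hrev : ∀ x u, π x * p x u = π u * p u x) :
    (densityKernel ν p).IsReversible (densityMeasure ν π) := by
  have flow {A B : Set α} (hA : MeasurableSet A) (hB : MeasurableSet B) :
      ∫⁻ x in A, densityKernel ν p x B ∂densityMeasure ν π =
        ∫⁻ x in A, ∫⁻ u in B, .ofReal (π x * p x u) ∂ν ∂ν := by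
    rw [restrict_densityMeasure hA, lintegral_densityMeasure hπ.restrict]
    exact lintegral_congr fun x => hp.ofReal_mul_densityKernel_apply (hπ_nonneg x) x hB
  intro A B hA hB
  rw [flow hA hB, flow hB hA, lintegral_lintegral_swap]
  · simp only [hrev]
  · rw [Measure.prod_restrict]
    exact (hp.aemeasurable_mul hπ).ennreal_ofReal.restrict

lemma comp_densityMeasure (hp : IsTransitionDensity ν p) {a : α → ℝ} (ha : Integrable a ν)
    (ha_nonneg : 0 ≤ a) :
    densityKernel ν p ∘ₘ densityMeasure ν a = densityMeasure ν fun u => ∫ v, a v * p v u ∂ν := by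
  ext s hs
  calc (densityKernel ν p ∘ₘ densityMeasure ν a) s
      = ∫⁻ v, ∫⁻ u in s, .ofReal (a v * p v u) ∂ν ∂ν := by
        rw [Measure.bind_apply hs (Kernel.aemeasurable _), lintegral_densityMeasure ha.aemeasurable]
        exact lintegral_congr fun v => hp.ofReal_mul_densityKernel_apply (ha_nonneg v) v hs
    _ = ∫⁻ u in s, ∫⁻ v, .ofReal (a v * p v u) ∂ν ∂ν := by
        refine lintegral_lintegral_swap ?_
        rw [← Measure.restrict_univ (μ := ν), Measure.restrict_restrict hs, Measure.prod_restrict]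
        exact (hp.aemeasurable_mul ha.aemeasurable).ennreal_ofReal.restrict
    _ = ∫⁻ u in s, .ofReal (∫ v, a v * p v u ∂ν) ∂ν := by
        refine lintegral_congr_ae (ae_restrict_of_ae ?_)
        filter_upwards [(hp.integrable_mul ha).prod_left_ae] with u hu
        exact (ofReal_integral_eq_lintegral_ofReal hu
          (.of_forall fun v => mul_nonneg (ha_nonneg v) (hp.nonneg v u))).symm
    _ = densityMeasure ν (fun u => ∫ v, a v * p v u ∂ν) s := by
        rw [densityMeasure, withDensity_apply _ hs]

end IsTransitionDensity

end Density

section IterDens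

variable {p : ℝ → ℝ → ℝ}

lemma iterDens_nonneg (hp : IsTransitionDensity volume p) (n : ℕ) (x u : ℝ) :
    0 ≤ iterDens p n x u := by
  match n with
  | 0 => exact le_rfl
  | 1 => exact hp.nonneg x u
  | n + 2 =>
    exact integral_nonneg fun v => mul_nonneg (iterDens_nonneg hp (n + 1) x v) (hp.nonneg v u)

lemma measurable_iterDens (hp : Measurable (Function.uncurry p)) (n : ℕ) :
    Measurable (Function.uncurry (iterDens p n)) := by
  match n with
  | 0 => exact measurable_const
  | 1 => exact hp
  | n + 2 =>
    have ih := measurable_iterDens hp (n + 1)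
    have hmeas : Measurable fun z : (ℝ × ℝ) × ℝ => iterDens p (n + 1) z.1.1 z.2 * p z.2 z.1.2 :=
      (ih.comp (by fun_prop : Measurable fun z : (ℝ × ℝ) × ℝ => (z.1.1, z.2))).mul
        (hp.comp (by fun_prop : Measurable fun z : (ℝ × ℝ) × ℝ => (z.2, z.1.2)))
    exact hmeas.stronglyMeasurable.integral_prod_right.measurable

lemma integrable_iterDens (hp : IsTransitionDensity volume p) (n : ℕ) (x : ℝ) :
    Integrable (iterDens p n x) := by
  match n with
  | 0 => exact integrable_zero ℝ ℝ volume
  | 1 => exact hp.integrable x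
  | n + 2 => exact (hp.integrable_mul (integrable_iterDens hp (n + 1) x)).integral_prod_right

lemma densityKernel_pow_apply (hp : IsTransitionDensity volume p) {n : ℕ} (hn : 1 ≤ n) (x : ℝ) :
    (densityKernel volume p ^ n) x = densityMeasure volume (iterDens p n x) := by
  induction n, hn using Nat.le_induction with
  | base => rw [pow_one, hp.densityKernel_apply]; rfl
  | succ n hn ih =>
    obtain ⟨n, rfl⟩ := Nat.exists_eq_add_of_le' hn
    calc (densityKernel volume p ^ (n + 1 + 1)) x
        = densityKernel volume p ∘ₘ (densityKernel volume p ^ (n + 1)) x := by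
          rw [pow_succ']
          exact Kernel.comp_apply _ _ x
      _ = densityMeasure volume (iterDens p (n + 2) x) := by
          rw [ih, hp.comp_densityMeasure (integrable_iterDens hp (n + 1) x)
            (iterDens_nonneg hp (n + 1) x)]
          rfl

end IterDens

section TestFunction

variable {α : Type*} {mα : MeasurableSpace α} {ν : Measure α} {p : α → α → ℝ} {π : α → ℝ}

lemma sqrt_mul_eq_of_mul_eq_mul {a b s t : ℝ} (ha : 0 < a) (hb : 0 < b) (hs : 0 ≤ s)
    (h : a * s = b * t) : √(s * t) = a * (√a)⁻¹ * (s * (√b)⁻¹) := by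
  have ht : s * t = s ^ 2 * (a / b) := by
    rw [← mul_div_assoc, eq_div_iff hb.ne']
    linear_combination -s * h
  rw [ht, Real.sqrt_mul (sq_nonneg s), Real.sqrt_sq hs, Real.sqrt_div ha.le, ← div_eq_mul_inv a,
    Real.div_sqrt]
  ring

/-- The test function `1_A / √π`, whose square has integral `ν A` against the density `π`. -/
def invSqrtIndicator (π : α → ℝ) (A : Set α) : α → ℝ :=
  A.indicator fun x => (√(π x))⁻¹

lemma invSqrtIndicator_nonneg (π : α → ℝ) (A : Set α) : 0 ≤ invSqrtIndicator π A :=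
  indicator_nonneg fun _ _ => by positivity

lemma support_invSqrtIndicator (hπ_pos : ∀ x, 0 < π x) (A : Set α) :
    (invSqrtIndicator π A).support = A := by
  ext x
  simp [invSqrtIndicator, (Real.sqrt_pos.2 (hπ_pos x)).ne']

lemma abs_invSqrtIndicator_le (hπ_pos : ∀ x, 0 < π x) {A : Set α} {K : ℝ}
    (hA : ∀ x ∈ A, 1 ≤ K * π x) (x : α) : |invSqrtIndicator π A x| ≤ √K := by
  rw [abs_of_nonneg (invSqrtIndicator_nonneg π A x)]
  refine indicator_apply_le' (fun hx => ?_) fun _ => Real.sqrt_nonneg K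
  rw [← Real.sqrt_inv]
  exact Real.sqrt_le_sqrt ((inv_le_iff_one_le_mul₀ (hπ_pos x)).2 (hA x hx))

lemma aestronglyMeasurable_invSqrtIndicator (hπ : AEMeasurable π ν) {A : Set α}
    (hA : NullMeasurableSet A ν) : AEStronglyMeasurable (invSqrtIndicator π A) ν :=
  (Real.continuous_sqrt.measurable.comp_aemeasurable hπ).inv.aestronglyMeasurable.indicator₀ hA

lemma lintegral_sq_invSqrtIndicator (hπ_pos : ∀ x, 0 < π x) (hπ : AEMeasurable π ν) {A : Set α}
    (hA : NullMeasurableSet A ν) :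
    ∫⁻ x, .ofReal (invSqrtIndicator π A x ^ 2) ∂densityMeasure ν π = ν A := by
  rw [lintegral_densityMeasure hπ, ← lintegral_indicator_one₀ hA]
  refine lintegral_congr fun x => ?_
  rw [← ENNReal.ofReal_mul (hπ_pos x).le]
  by_cases hx : x ∈ A
  · simp [invSqrtIndicator, hx, Real.sq_sqrt (hπ_pos x).le, (hπ_pos x).ne']
  · simp [invSqrtIndicator, hx]

lemma lintegral_invSqrtIndicator_mul [SFinite ν] (hp : IsTransitionDensity ν p)
    (hπ_pos : ∀ x, 0 < π x) (hπ : AEMeasurable π ν) (hrev : ∀ x u, π x * p x u = π u * p u x)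
    {A : Set α} (hA : NullMeasurableSet A ν) :
    ∫⁻ x, .ofReal (invSqrtIndicator π A x) *
        ∫⁻ u, .ofReal (invSqrtIndicator π A u) ∂densityKernel ν p x ∂densityMeasure ν π =
      ∫⁻ z in A ×ˢ A, .ofReal √(p z.1 z.2 * p z.2 z.1) ∂ν.prod ν := by
  have hmeas : Measurable fun z : α × α => ENNReal.ofReal √(p z.1 z.2 * p z.2 z.1) :=
    (hp.measurable.mul (hp.measurable.comp measurable_swap)).sqrt.ennreal_ofReal
  have integrand (x u : α) (hx : x ∈ A) : .ofReal (π x) * (.ofReal (invSqrtIndicator π A x) *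
      (.ofReal (p x u) * .ofReal (invSqrtIndicator π A u))) =
        A.indicator (fun u => ENNReal.ofReal √(p x u * p u x)) u := by
    by_cases hu : u ∈ A
    · rw [indicator_of_mem hu, sqrt_mul_eq_of_mul_eq_mul (hπ_pos x) (hπ_pos u) (hp.nonneg x u)
        (hrev x u), invSqrtIndicator, indicator_of_mem hx, indicator_of_mem hu,
        ← ENNReal.ofReal_mul (hp.nonneg x u), ← mul_assoc, ← ENNReal.ofReal_mul (hπ_pos x).le,
        ← ENNReal.ofReal_mul (mul_nonneg (hπ_pos x).le (by positivity))]
    · simp [invSqrtIndicator, hu]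
  rw [← Measure.prod_restrict, lintegral_prod _ hmeas.aemeasurable,
    lintegral_densityMeasure hπ, ← lintegral_indicator₀ hA]
  refine lintegral_congr fun x => ?_
  by_cases hx : x ∈ A
  · rw [indicator_of_mem hx, ← lintegral_indicator₀ hA, hp.densityKernel_apply,
      lintegral_densityMeasure (hp.integrable x).aemeasurable,
      ← lintegral_const_mul' _ _ ENNReal.ofReal_ne_top,
      ← lintegral_const_mul' _ _ ENNReal.ofReal_ne_top]
    exact lintegral_congr fun u => integrand x u hx
  · simp [invSqrtIndicator, hx]

end TestFunction

section GeometricConvergence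

variable {p : ℝ → ℝ → ℝ} {π : ℝ → ℝ} {r : ℝ}

/-- The starting points from which the chain converges to `π` in total variation at rate `r` with
constant `K`, and at which `π` is at least `1 / K`. -/
def geomConvergenceSet (p : ℝ → ℝ → ℝ) (π : ℝ → ℝ) (r : ℝ) (K : ℕ) : Set ℝ :=
  {x | 1 ≤ K * π x ∧ ∀ n, 1 ≤ n → ∫ u, |iterDens p n x u - π u| ≤ K * r ^ n}

lemma nullMeasurableSet_geomConvergenceSet (hp : Measurable (Function.uncurry p))
    (hπ : AEMeasurable π) (K : ℕ) : NullMeasurableSet (geomConvergenceSet p π r K) := by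
  have hdist (n : ℕ) : AEMeasurable fun x => ∫ u, |iterDens p n x u - π u| := by
    have hdiff : AEMeasurable (fun z : ℝ × ℝ => |iterDens p n z.1 z.2 - π z.2|)
        (volume.prod volume) :=
      ((measurable_iterDens hp n).aemeasurable.sub
        (hπ.comp_quasiMeasurePreserving Measure.quasiMeasurePreserving_snd)).abs
    exact hdiff.aestronglyMeasurable.integral_prod_right'.aemeasurable
  simp only [geomConvergenceSet, ofPred_and, ofPred_forall]
  exact (nullMeasurableSet_le aemeasurable_const (hπ.const_mul _)).inter
    (.iInter fun n => .iInter fun _ => nullMeasurableSet_le (hdist n) aemeasurable_const)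

lemma monotone_geomConvergenceSet (hr : 0 ≤ r) (hπ : 0 ≤ π) :
    Monotone (geomConvergenceSet p π r) := by
  intro K K' hK x hx
  have hK' : (K : ℝ) ≤ K' := by exact_mod_cast hK
  exact ⟨hx.1.trans (mul_le_mul_of_nonneg_right hK' (hπ x)), fun n hn => (hx.2 n hn).trans
    (mul_le_mul_of_nonneg_right hK' (pow_nonneg hr n))⟩

lemma iUnion_geomConvergenceSet (hr : 0 ≤ r) (hπ : ∀ x, 0 < π x) {M : ℝ → ℝ}
    (hM : ∀ x n, 1 ≤ n → ∫ u, |iterDens p n x u - π u| ≤ M x * r ^ n) :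
    ⋃ K, geomConvergenceSet p π r K = univ := by
  refine eq_univ_of_forall fun x => mem_iUnion.2 ?_
  obtain ⟨K, hK⟩ := exists_nat_ge (max (π x)⁻¹ (M x))
  obtain ⟨hπK, hMK⟩ := max_le_iff.1 hK
  exact ⟨K, (inv_le_iff_one_le_mul₀ (hπ x)).1 hπK, fun n hn => (hM x n hn).trans
    (mul_le_mul_of_nonneg_right hMK (pow_nonneg hr n))⟩

lemma setLIntegral_sqrt_mul_le_of_subset_geomConvergenceSet (hp : IsTransitionDensity volume p)
    (hπ_pos : ∀ x, 0 < π x) (hπ_prob : ∫ x, π x = 1) (hrev : ∀ x u, π x * p x u = π u * p u x)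
    (hr : 0 ≤ r) {K : ℕ} {A : Set ℝ} (hA : NullMeasurableSet A)
    (hAK : A ⊆ geomConvergenceSet p π r K) :
    ∫⁻ z in A ×ˢ A, .ofReal √(p z.1 z.2 * p z.2 z.1) ≤
      (.ofReal r + densityMeasure volume π A) * volume A := by
  have hπ : Integrable π := .of_integral_ne_zero (by simp [hπ_prob])
  have hπ_nonneg : 0 ≤ π := fun x => (hπ_pos x).le
  have := isProbabilityMeasure_densityMeasure hπ_nonneg hπ_prob
  have := hp.isMarkovKernel_densityKernel
  set g := invSqrtIndicator π A
  have hg_le : ∀ x, |g x| ≤ √K := abs_invSqrtIndicator_le hπ_pos fun x hx => (hAK hx).1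
  have hg_supp : g.support = A := support_invSqrtIndicator hπ_pos A
  have hg_meas : AEStronglyMeasurable g := aestronglyMeasurable_invSqrtIndicator hπ.aemeasurable hA
  have hg : MemLp g 2 (densityMeasure volume π) :=
    .of_bound (hg_meas.mono_ac (withDensity_absolutelyContinuous _ _)) (√K) (.of_forall hg_le)
  have hgeom (x : ℝ) (hx : g x ≠ 0) (n : ℕ) (hn : 1 ≤ n) :
      |∫ y, g y ∂(densityKernel volume p ^ n) x - ∫ y, g y ∂densityMeasure volume π| ≤
        √K * K * r ^ n := by
    rw [densityKernel_pow_apply hp hn, mul_assoc]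
    refine (abs_integral_densityMeasure_sub_le (integrable_iterDens hp n x) hπ
      (iterDens_nonneg hp n x) hπ_nonneg hg_meas hg_le).trans ?_
    gcongr
    exact (hAK (hg_supp ▸ hx)).2 n hn
  have key := lintegral_mul_lintegral_le_of_geometric
    (hp.isReversible_densityKernel hπ.aemeasurable hπ_nonneg hrev) hg
    (invSqrtIndicator_nonneg π A) hr hgeom
  rwa [lintegral_invSqrtIndicator_mul hp hπ_pos hπ.aemeasurable hrev hA, hg_supp,
    lintegral_sq_invSqrtIndicator hπ_pos hπ.aemeasurable hA] at key

lemma setLIntegral_sqrt_mul_le_of_geometric (hp : IsTransitionDensity volume p)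
    (hπ_pos : ∀ x, 0 < π x) (hπ_prob : ∫ x, π x = 1) (hrev : ∀ x u, π x * p x u = π u * p u x)
    (hr : 0 ≤ r) {M : ℝ → ℝ}
    (hM : ∀ x n, 1 ≤ n → ∫ u, |iterDens p n x u - π u| ≤ M x * r ^ n)
    {B : Set ℝ} (hB : MeasurableSet B) :
    ∫⁻ z in B ×ˢ B, .ofReal √(p z.1 z.2 * p z.2 z.1) ≤
      (.ofReal r + densityMeasure volume π B) * volume B := by
  have hπ : AEMeasurable π :=
    (Integrable.of_integral_ne_zero (by simp [hπ_prob])).aemeasurable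
  set A : ℕ → Set ℝ := fun K => B ∩ geomConvergenceSet p π r K
  have hA_mono : Monotone A := fun K K' hK =>
    inter_subset_inter_right B (monotone_geomConvergenceSet hr (fun x => (hπ_pos x).le) hK)
  have hA_union : ⋃ K, A K = B := by
    rw [← inter_iUnion, iUnion_geomConvergenceSet hr hπ_pos hM, inter_univ]
  have hBB : B ×ˢ B = ⋃ K, A K ×ˢ A K := by
    rw [iUnion_prod_of_monotone hA_mono hA_mono, hA_union]
  rw [hBB, setLIntegral_iUnion_of_directed _ (hA_mono.set_prod hA_mono).directed_le]
  refine iSup_le fun K => ?_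
  calc ∫⁻ z in A K ×ˢ A K, .ofReal √(p z.1 z.2 * p z.2 z.1)
      ≤ (.ofReal r + densityMeasure volume π (A K)) * volume (A K) :=
        setLIntegral_sqrt_mul_le_of_subset_geomConvergenceSet hp hπ_pos hπ_prob hrev hr
          (hB.nullMeasurableSet.inter (nullMeasurableSet_geomConvergenceSet hp.measurable hπ K))
          inter_subset_right
    _ ≤ (.ofReal r + densityMeasure volume π B) * volume B := by
        gcongr <;> exact inter_subset_left

end GeometricConvergence

section RandomWalk

lemma setLIntegral_prod_Icc_add (F : ℝ × ℝ → ℝ≥0∞) (c L : ℝ) :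
    ∫⁻ z in Icc c (c + L) ×ˢ Icc c (c + L), F z =
      ∫⁻ z in Icc 0 L ×ˢ Icc 0 L, F (c + z.1, c + z.2) := by
  have hpre : ((c, c) + · : ℝ × ℝ → ℝ × ℝ) ⁻¹' (Icc c (c + L) ×ˢ Icc c (c + L)) =
      Icc 0 L ×ˢ Icc 0 L := by
    ext ⟨s, t⟩
    simp only [mem_preimage, mem_prod, mem_Icc, Prod.mk_add_mk, le_add_iff_nonneg_right,
      add_le_add_iff_left]
  rw [← (measurePreserving_add_left volume (c, c)).setLIntegral_comp_preimage_emb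
    (measurableEmbedding_addLeft (c, c)), hpre]
  rfl

lemma tendsto_measure_Icc_add_natCast (Q : Measure ℝ) [IsFiniteMeasure Q] (L : ℝ) :
    Tendsto (fun n : ℕ => Q (Icc (n : ℝ) (n + L))) atTop (nhds 0) := by
  have hanti : Antitone fun n : ℕ => Ici (n : ℝ) := fun m n hmn =>
    Ici_subset_Ici.2 (Nat.cast_le.2 hmn)
  have hempty : ⋂ n : ℕ, Ici (n : ℝ) = ∅ :=
    iInter_eq_empty_iff.2 fun x => (exists_nat_gt x).imp fun n hn => not_le.2 hn
  have hlim := tendsto_measure_iInter_atTop (μ := Q)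
    (fun n : ℕ => measurableSet_Ici.nullMeasurableSet) hanti ⟨0, measure_ne_top Q _⟩
  rw [hempty, measure_empty] at hlim
  exact tendsto_of_tendsto_of_tendsto_of_le_of_le tendsto_const_nhds hlim (fun _ => zero_le)
    fun n => measure_mono Icc_subset_Ici_self

lemma setLIntegral_sqrt_mul_sub_le_of_tendsto {p : ℝ → ℝ → ℝ} {q : ℝ → ℝ} {c : ℝ≥0∞} {Q : Measure ℝ}
    [IsFiniteMeasure Q] (hp : Measurable (Function.uncurry p))
    (hrw : ∀ z, Tendsto (fun x => p x (x + z)) atTop (nhds (q z)))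
    (hpQ : ∀ B, MeasurableSet B →
      ∫⁻ z in B ×ˢ B, .ofReal √(p z.1 z.2 * p z.2 z.1) ≤ (c + Q B) * volume B) (L : ℝ) :
    ∫⁻ z in Icc 0 L ×ˢ Icc 0 L, .ofReal √(q (z.2 - z.1) * q (z.1 - z.2)) ≤ c * .ofReal L := by
  have hp_shift (s t : ℝ) : Tendsto (fun n : ℕ => p (n + s) (n + t)) atTop (nhds (q (t - s))) := by
    refine ((hrw (t - s)).comp
      (tendsto_atTop_add_const_right _ s tendsto_natCast_atTop_atTop)).congr fun n => ?_
    simp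
  set F : ℕ → ℝ × ℝ → ℝ≥0∞ := fun n z =>
    .ofReal √(p (n + z.1) (n + z.2) * p (n + z.2) (n + z.1))
  have hF_meas (n : ℕ) : Measurable (F n) :=
    ((hp.comp (by fun_prop : Measurable fun z : ℝ × ℝ => ((n : ℝ) + z.1, (n : ℝ) + z.2))).mul
      (hp.comp (by fun_prop : Measurable fun z : ℝ × ℝ => ((n : ℝ) + z.2, (n : ℝ) + z.1)))
      ).sqrt.ennreal_ofReal
  have hF_lim (z : ℝ × ℝ) : Tendsto (F · z) atTop
      (nhds (.ofReal √(q (z.2 - z.1) * q (z.1 - z.2)))) :=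
    ENNReal.tendsto_ofReal ((hp_shift z.1 z.2).mul (hp_shift z.2 z.1)).sqrt
  have hF_le (n : ℕ) : ∫⁻ z in Icc 0 L ×ˢ Icc 0 L, F n z ≤ (c + Q (Icc n (n + L))) * .ofReal L := by
    have h := hpQ (Icc n (n + L)) measurableSet_Icc
    rwa [setLIntegral_prod_Icc_add, Real.volume_Icc, add_sub_cancel_left] at h
  calc ∫⁻ z in Icc 0 L ×ˢ Icc 0 L, .ofReal √(q (z.2 - z.1) * q (z.1 - z.2))
      = ∫⁻ z in Icc 0 L ×ˢ Icc 0 L, liminf (F · z) atTop := by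
        simp only [(hF_lim _).liminf_eq]
    _ ≤ liminf (fun n => ∫⁻ z in Icc 0 L ×ˢ Icc 0 L, F n z) atTop := lintegral_liminf_le hF_meas
    _ ≤ liminf (fun n : ℕ => (c + Q (Icc n (n + L))) * .ofReal L) atTop :=
        liminf_le_liminf (.of_forall hF_le)
    _ = c * .ofReal L := by
        refine Tendsto.liminf_eq (ENNReal.Tendsto.mul_const ?_ (.inr ENNReal.ofReal_ne_top))
        simpa using (tendsto_measure_Icc_add_natCast Q L).const_add c

lemma ofReal_sub_mul_setLIntegral_Icc_le {f : ℝ → ℝ≥0∞} (hf : Measurable f) {R : ℝ}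
    (hR : 0 ≤ R) (L : ℝ) :
    .ofReal (L - 2 * R) * ∫⁻ z in Icc (-R) R, f z ≤
      ∫⁻ z in Icc 0 L ×ˢ Icc 0 L, f (z.2 - z.1) := by
  have inner_le (s : ℝ) (hs : s ∈ Icc R (L - R)) :
      ∫⁻ z in Icc (-R) R, f z ≤ ∫⁻ t in Icc 0 L, f (t - s) := by
    rw [← (measurePreserving_sub_right volume s).setLIntegral_comp_preimage_emb
      (measurableEmbedding_subRight s)]
    refine lintegral_mono_set fun t ht => ?_
    constructor <;> linarith [hs.1, hs.2, ht.1, ht.2]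
  calc .ofReal (L - 2 * R) * ∫⁻ z in Icc (-R) R, f z
      = ∫⁻ _ in Icc R (L - R), ∫⁻ z in Icc (-R) R, f z := by
        rw [setLIntegral_const, Real.volume_Icc, mul_comm, sub_sub, two_mul]
    _ ≤ ∫⁻ s in Icc R (L - R), ∫⁻ t in Icc 0 L, f (t - s) :=
        setLIntegral_mono' measurableSet_Icc inner_le
    _ ≤ ∫⁻ s in Icc 0 L, ∫⁻ t in Icc 0 L, f (t - s) :=
        lintegral_mono_set (Icc_subset_Icc hR (sub_le_self L hR))
    _ = ∫⁻ z in Icc 0 L ×ˢ Icc 0 L, f (z.2 - z.1) := by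
        rw [Measure.volume_eq_prod, ← Measure.prod_restrict, lintegral_prod _ (by fun_prop)]

lemma setLIntegral_Icc_le_of_setLIntegral_sub_le {f : ℝ → ℝ≥0∞} (hf : Measurable f) {c : ℝ≥0∞}
    (hfc : ∀ L, ∫⁻ z in Icc 0 L ×ˢ Icc 0 L, f (z.2 - z.1) ≤ c * .ofReal L) {R : ℝ} (hR : 0 ≤ R) :
    ∫⁻ z in Icc (-R) R, f z ≤ c := by
  set I := ∫⁻ z in Icc (-R) R, f z
  have hle (L : ℝ) (hL : 0 < L) : .ofReal (1 - 2 * R / L) * I ≤ c := by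
    rw [← ENNReal.mul_le_mul_iff_left (ENNReal.ofReal_pos.2 hL).ne' ENNReal.ofReal_ne_top]
    calc .ofReal (1 - 2 * R / L) * I * .ofReal L = .ofReal (L - 2 * R) * I := by
          rw [mul_right_comm, ← ENNReal.ofReal_mul' hL.le, sub_mul, one_mul,
            div_mul_cancel₀ _ hL.ne']
      _ ≤ c * .ofReal L := (ofReal_sub_mul_setLIntegral_Icc_le hf hR L).trans (hfc L)
  have hratio : Tendsto (fun L : ℝ => 1 - 2 * R / L) atTop (nhds 1) := by
    have hzero : Tendsto (fun L : ℝ => 2 * R / L) atTop (nhds 0) :=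
      tendsto_const_nhds.div_atTop tendsto_id
    simpa using hzero.const_sub 1
  have hlim : Tendsto (fun L : ℝ => .ofReal (1 - 2 * R / L) * I) atTop (nhds I) := by
    simpa using ENNReal.Tendsto.mul_const (ENNReal.tendsto_ofReal hratio) (.inl (by simp))
  exact le_of_tendsto hlim ((eventually_gt_atTop 0).mono hle)

lemma lintegral_le_of_setLIntegral_sub_le {f : ℝ → ℝ≥0∞} (hf : Measurable f) {c : ℝ≥0∞}
    (hfc : ∀ L, ∫⁻ z in Icc 0 L ×ˢ Icc 0 L, f (z.2 - z.1) ≤ c * .ofReal L) :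
    ∫⁻ z, f z ≤ c := by
  have hmono : Monotone fun n : ℕ => Icc (-n : ℝ) n := fun m n hmn => by
    have : (m : ℝ) ≤ n := Nat.cast_le.2 hmn
    exact Icc_subset_Icc (neg_le_neg this) this
  have hunion : ⋃ n : ℕ, Icc (-n : ℝ) n = univ := by
    refine eq_univ_of_forall fun x => mem_iUnion.2 ?_
    exact (exists_nat_ge |x|).imp fun n hn => abs_le.1 hn
  rw [← setLIntegral_univ, ← hunion, setLIntegral_iUnion_of_directed _ hmono.directed_le]
  exact iSup_le fun n => setLIntegral_Icc_le_of_setLIntegral_sub_le hf hfc n.cast_nonneg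

lemma lintegral_sqrt_mul_neg_le_of_tendsto {p : ℝ → ℝ → ℝ} {q : ℝ → ℝ} {c : ℝ≥0∞} {Q : Measure ℝ}
    [IsFiniteMeasure Q] (hp : Measurable (Function.uncurry p))
    (hrw : ∀ z, Tendsto (fun x => p x (x + z)) atTop (nhds (q z)))
    (hpQ : ∀ B, MeasurableSet B →
      ∫⁻ z in B ×ˢ B, .ofReal √(p z.1 z.2 * p z.2 z.1) ≤ (c + Q B) * volume B) :
    ∫⁻ z, .ofReal √(q z * q (-z)) ≤ c := by
  have hq : Measurable q := measurable_of_tendsto_metrizable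
    (fun n : ℕ => hp.comp (by fun_prop : Measurable fun z : ℝ => ((n : ℝ), (n : ℝ) + z)))
    (tendsto_pi_nhds.2 fun z => (hrw z).comp tendsto_natCast_atTop_atTop)
  refine lintegral_le_of_setLIntegral_sub_le (by fun_prop) fun L => ?_
  simpa only [neg_sub] using setLIntegral_sqrt_mul_sub_le_of_tendsto hp hrw hpQ L

end RandomWalk

theorem random_walk_like_implies_not_geometrically_ergodic_general
    (p : ℝ → ℝ → ℝ) (π : ℝ → ℝ) (q : ℝ → ℝ)
    (hp_meas : Measurable (Function.uncurry p))
    (hp_nonneg : ∀ x u, 0 ≤ p x u)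
    (hp_prob : ∀ x, ∫ u, p x u = 1)
    (hπ_pos : ∀ x, 0 < π x) (hπ_prob : ∫ x, π x = 1)
    (hrev : ∀ x u, π x * p x u = π u * p u x)
    (hq_sym : ∀ z, q (-z) = q z) (hq_prob : ∫ z, q z = 1)
    (hrw : ∀ z : ℝ, Tendsto (fun x => p x (x + z)) atTop (nhds (q z))) :
    ¬ ∃ r : ℝ, 0 ≤ r ∧ r < 1 ∧ ∃ M : ℝ → ℝ, ∀ x₀ : ℝ, ∀ n : ℕ, 1 ≤ n →
      (∫ u, |iterDens p n x₀ u - π u|) ≤ M x₀ * r ^ n := by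
  rintro ⟨r, hr₀, hr₁, M, hM⟩
  have hp : IsTransitionDensity volume p := ⟨hp_meas, hp_nonneg, hp_prob⟩
  have hq_nonneg (z : ℝ) : 0 ≤ q z := ge_of_tendsto' (hrw z) fun x => hp_nonneg x (x + z)
  have := isProbabilityMeasure_densityMeasure (fun x => (hπ_pos x).le) hπ_prob
  have hle : ∫⁻ z, .ofReal √(q z * q (-z)) ≤ .ofReal r :=
    lintegral_sqrt_mul_neg_le_of_tendsto hp_meas hrw fun B =>
      setLIntegral_sqrt_mul_le_of_geometric hp hπ_pos hπ_prob hrev hr₀ hM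
  have hone : ∫⁻ z, .ofReal √(q z * q (-z)) = 1 := by
    simp only [hq_sym, Real.sqrt_mul_self (hq_nonneg _)]
    rw [← ofReal_integral_eq_lintegral_ofReal (.of_integral_ne_zero (by simp [hq_prob]))
      (.of_forall hq_nonneg), hq_prob, ENNReal.ofReal_one]
  rw [hone, ENNReal.one_le_ofReal] at hle
  exact hr₁.not_ge hle

/-- a reversible, Π-irreducible Markov chain on `ℝ` whose transition
density is random-walk-like in the tails is not geometrically ergodic. -/
theorem random_walk_like_implies_not_geometrically_ergodic
    (p : ℝ → ℝ → ℝ) (π : ℝ → ℝ) (q : ℝ → ℝ)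
    (hp_meas : Measurable (Function.uncurry p))
    (hp_nonneg : ∀ x u, 0 ≤ p x u)
    (hp_prob : ∀ x, ∫ u, p x u = 1)
    (hπ_pos : ∀ x, 0 < π x) (hπ_prob : ∫ x, π x = 1)
    (hrev : ∀ x u, π x * p x u = π u * p u x)
    (hirr : ∀ x : ℝ, ∀ A : Set ℝ, MeasurableSet A → (0 < ∫ u in A, π u) →
      ∃ n : ℕ, 1 ≤ n ∧ 0 < ∫ u in A, iterDens p n x u)
    (hq_cont : Continuous q) (hq_pos : ∀ z, 0 < q z)
    (hq_sym : ∀ z, q (-z) = q z) (hq_prob : ∫ z, q z = 1)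
    (hrw : ∀ z : ℝ, Tendsto (fun x => p x (x + z)) (cocompact ℝ) (nhds (q z))) :
    ¬ ∃ r : ℝ, 0 ≤ r ∧ r < 1 ∧ ∃ M : ℝ → ℝ, (∀ x, 0 ≤ M x) ∧
      ∀ x₀ : ℝ, ∀ n : ℕ, 1 ≤ n →
        (∫ u, |iterDens p n x₀ u - π u|) ≤ M x₀ * r ^ n := by
  rintro ⟨r, hr₀, hr₁, M, -, hM⟩
  exact random_walk_like_implies_not_geometrically_ergodic_general p π q hp_meas hp_nonneg hp_prob
    hπ_pos hπ_prob hrev hq_sym hq_prob (fun z => (hrw z).mono_left atTop_le_cocompact)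
    ⟨r, hr₀, hr₁, M, hM⟩
end
end

section
/- Let p : ℝ × ℝ → [0, ∞) be a measurable transition density and π an everywhere positive probability density on ℝ satisfying detailed balance π(x)·p(x, u) = π(u)·p(u, x) for all x, u, and suppose for every z ∈ ℝ, p(x, x + z) → q(z) as |x| → ∞, where q is a continuous, everywhere positive probability density symmetric about 0. Then for every z > 0 and every δ > 0 there exists k > 0 such that: (i) for all x > k, π(x + z) ≥ (1 + δ)^{−1} π(x); and consequently (ii) ∫_{k+z}^∞ π(u) du ≥ (1 + δ)^{−1} ∫_k^∞ π(u) du. -/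
open MeasureTheory Filter Set

open Asymptotics Topology

/-!
Detailed balance gives `π (x + z) / π x = p x (x + z) / p (x + z) x`. The numerator tends to `q z`
and the denominator, a jump of `-z` from `x + z`, tends to `q (-z) = q z ≠ 0`, so the ratio tends
to `1` and eventually exceeds any `c < 1`. Integrating over `[k, ∞)` and shifting by `z` gives the
bound on the tail integrals.
-/

theorem isEquivalent_comp_of_detailed_balance {α 𝕜 : Type*} [NormedField 𝕜] {p : α → α → 𝕜}
    {π : α → 𝕜} {T : α → α} {l : Filter α} {a : 𝕜} (ha : a ≠ 0)
    (hrev : ∀ x, π x * p x (T x) = π (T x) * p (T x) x)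
    (h_forward : Tendsto (fun x ↦ p x (T x)) l (𝓝 a))
    (h_backward : Tendsto (fun x ↦ p (T x) x) l (𝓝 a)) :
    (π ∘ T) ~[l] π := by
  have h_ratio : Tendsto (fun x ↦ p x (T x) / p (T x) x) l (𝓝 1) := by
    simpa only [div_self ha] using! h_forward.div h_backward ha
  refine isEquivalent_iff_exists_eq_mul.2 ⟨_, h_ratio, ?_⟩
  filter_upwards [h_backward.eventually_ne ha] with x hx
  simp only [Function.comp_apply, Pi.mul_apply]
  rw [div_mul_eq_mul_div, eq_div_iff hx, ← hrev x, mul_comm]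

theorem eventually_const_mul_le_of_isEquivalent {α : Type*} {l : Filter α} {u v : α → ℝ} {c : ℝ}
    (huv : u ~[l] v) (hv : 0 ≤ᶠ[l] v) (hc : c < 1) : ∀ᶠ x in l, c * v x ≤ u x := by
  obtain ⟨φ, hφ, hu⟩ := huv.exists_eq_mul
  filter_upwards [hu, hv, hφ.eventually_const_lt hc] with x hux hvx hcφ
  rw [hux]
  exact mul_le_mul_of_nonneg_right hcφ.le hvx

/-- A function is long-tailed if `f (x + z) / f x → 1` as `x → ∞`, for every fixed shift `z`. The
quotient is replaced by asymptotic equivalence, so that `f` may vanish. -/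
def IsLongTailed (f : ℝ → ℝ) : Prop :=
  ∀ z, (fun x ↦ f (x + z)) ~[atTop] f

theorem isLongTailed_of_detailed_balance {p : ℝ → ℝ → ℝ} {π q : ℝ → ℝ}
    (hrev : ∀ x u, π x * p x u = π u * p u x) (hq_ne : ∀ z, q z ≠ 0) (hq_sym : ∀ z, q (-z) = q z)
    (hrw : ∀ z, Tendsto (fun x ↦ p x (x + z)) atTop (𝓝 (q z))) : IsLongTailed π := by
  intro z
  have h_backward : Tendsto (fun x ↦ p (x + z) x) atTop (𝓝 (q z)) := by
    simpa only [hq_sym, Function.comp_def, id_eq, add_neg_cancel_right] using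
      (hrw (-z)).comp (tendsto_atTop_add_const_right atTop z tendsto_id)
  exact isEquivalent_comp_of_detailed_balance (hq_ne z) (fun x ↦ hrev x (x + z)) (hrw z) h_backward

theorem setIntegral_Ici_add_right {E : Type*} [NormedAddCommGroup E] [NormedSpace ℝ E]
    (f : ℝ → E) (k z : ℝ) : ∫ u in Ici (k + z), f u = ∫ u in Ici k, f (u + z) := by
  simpa only [preimage_add_const_Ici, add_sub_cancel_right] using
    ((measurePreserving_add_right volume z).setIntegral_preimage_emb
      (measurableEmbedding_addRight z) f (Ici (k + z))).symm

theorem const_mul_setIntegral_Ici_le {f : ℝ → ℝ} {c k z : ℝ} (hf : Integrable f)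
    (hle : ∀ x, k < x → c * f x ≤ f (x + z)) :
    c * ∫ u in Ici k, f u ≤ ∫ u in Ici (k + z), f u := by
  rw [setIntegral_Ici_add_right, ← integral_const_mul, integral_Ici_eq_integral_Ioi,
    integral_Ici_eq_integral_Ioi]
  exact setIntegral_mono_on (hf.const_mul c).integrableOn (hf.comp_add_right z).integrableOn
    measurableSet_Ioi hle

theorem IsLongTailed.eventually_forall_const_mul_le {f : ℝ → ℝ} {c : ℝ} (hf : IsLongTailed f)
    (hf_nonneg : 0 ≤ᶠ[atTop] f) (hc : c < 1) (z : ℝ) :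
    ∀ᶠ k in atTop, ∀ x, k < x → c * f x ≤ f (x + z) :=
  (eventually_forall_ge_atTop.2 (eventually_const_mul_le_of_isEquivalent (hf z) hf_nonneg hc)).mono
    fun _ hk x hx ↦ hk x hx.le

theorem random_walk_like_tail_density_bound_general {p : ℝ → ℝ → ℝ} {π q : ℝ → ℝ}
    (hπ_nonneg : 0 ≤ᶠ[atTop] π) (hπ_int : Integrable π)
    (hrev : ∀ x u, π x * p x u = π u * p u x)
    (hq_ne : ∀ z, q z ≠ 0) (hq_sym : ∀ z, q (-z) = q z)
    (hrw : ∀ z, Tendsto (fun x ↦ p x (x + z)) atTop (𝓝 (q z))) (z : ℝ) {c : ℝ} (hc : c < 1) :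
    ∀ᶠ k in atTop, (∀ x, k < x → c * π x ≤ π (x + z)) ∧
      c * (∫ u in Ici k, π u) ≤ ∫ u in Ici (k + z), π u := by
  have hπ_long : IsLongTailed π := isLongTailed_of_detailed_balance hrev hq_ne hq_sym hrw
  filter_upwards [hπ_long.eventually_forall_const_mul_le hπ_nonneg hc z] with k hk
  exact ⟨hk, const_mul_setIntegral_Ici_le hπ_int hk⟩

/-- for a reversible chain whose transition density is random-walk-like in
the tails, the stationary density satisfies `π(x + z) ≥ (1 + δ)⁻¹ π(x)` far enough in the
right tail, and consequently the tail probabilities satisfy the corresponding bound. -/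
theorem random_walk_like_tail_density_bound (p : ℝ → ℝ → ℝ) (π : ℝ → ℝ) (q : ℝ → ℝ)
    (hp_meas : Measurable (Function.uncurry p))
    (hp_nonneg : ∀ x u, 0 ≤ p x u)
    (hp_prob : ∀ x, ∫ u, p x u = 1)
    (hπ_pos : ∀ x, 0 < π x) (hπ_prob : ∫ x, π x = 1)
    (hrev : ∀ x u, π x * p x u = π u * p u x)
    (hq_cont : Continuous q) (hq_pos : ∀ z, 0 < q z)
    (hq_sym : ∀ z, q (-z) = q z) (hq_prob : ∫ z, q z = 1)
    (hrw : ∀ z : ℝ, Tendsto (fun x => p x (x + z)) (cocompact ℝ) (nhds (q z))) :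
    ∀ z : ℝ, 0 < z → ∀ δ : ℝ, 0 < δ →
      ∃ k > (0 : ℝ),
        (∀ x : ℝ, k < x → (1 + δ)⁻¹ * π x ≤ π (x + z)) ∧
        (1 + δ)⁻¹ * (∫ u in Ici k, π u) ≤ ∫ u in Ici (k + z), π u := by
  intro z _ δ hδ
  have hπ_int : Integrable π := .of_integral_ne_zero (by simp [hπ_prob])
  have hc : (1 + δ)⁻¹ < 1 := inv_lt_one_of_one_lt₀ (by linarith)
  exact ((eventually_gt_atTop 0).and <| random_walk_like_tail_density_bound_general
    (.of_forall fun x ↦ (hπ_pos x).le) hπ_int hrev (fun x ↦ (hq_pos x).ne') hq_sym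
    (fun x ↦ (hrw x).mono_left atTop_le_cocompact) z hc).exists
end

section
/- In the Cauchy–Cauchy model, where f₁(t) = f₂(t) = 1/(π(1 + t²)) and y ∈ ℝ is fixed, the centred parametrisation is partially tight in parameter: for every k > 0, liminf_{|θ| → ∞} (1/c_θ) ∫_{y−k}^{y+k} f_θ(x) dx > 0, where f_θ(x) = f₁(y − x)·f₂(x − θ) and c_θ = ∫_ℝ f_θ(x) dx. In the course of the proof one has, for θ > y, the normalising-constant bound c_θ ≤ 4/(π(1 + (y − θ)²)). -/
open MeasureTheory Filter Set

noncomputable section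

/-- Standard Cauchy density. -/
def cauchyD (t : ℝ) : ℝ := 1 / (Real.pi * (1 + t ^ 2))

/-- Joint (unnormalised posterior) density `f_θ(x) = f₁(y - x) · f₂(x - θ)`. -/
def fjoint (f₁ f₂ : ℝ → ℝ) (y θ x : ℝ) : ℝ := f₁ (y - x) * f₂ (x - θ)

/-- Normalising constant `c_θ = ∫ f_θ(x) dx`. -/
def cnorm (f₁ f₂ : ℝ → ℝ) (y θ : ℝ) : ℝ := ∫ x, fjoint f₁ f₂ y θ x

/-!
Let `D` be the Cauchy density. Since `1 + (s + t)² ≤ 2 ((1 + s²) + (1 + t²))`,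
`D s * D t ≤ 2 D (s + t) (D s + D t)`; taking `s = y - x`, `t = x - θ` and integrating in `x`
gives `c_θ ≤ 4 D (y - θ)`. Since `1 + (s + t)² ≤ 2 (1 + s²) (1 + t²)`, moving the argument of `D`
from `y - θ` to `x - θ` costs only the factor `(π / 2) D (x - y)`, which does not depend on `θ`.
Hence `∫_a^b f_θ` is at least a positive constant times `D (y - θ)`, and `D (y - θ)` cancels in the
quotient by `c_θ`, which leaves a lower bound uniform in `θ`.
-/

section General

variable {f₁ f₂ : ℝ → ℝ} {y θ a b : ℝ}

/-- The conditional posterior probability that `X ∈ [a, b]` given `Θ = θ`, for `a ≤ b`. It is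
`0` when `c_θ = 0`, and signed as an interval integral when `b < a`. -/
def posteriorMass (f₁ f₂ : ℝ → ℝ) (y a b θ : ℝ) : ℝ :=
  (1 / cnorm f₁ f₂ y θ) * ∫ x in a..b, fjoint f₁ f₂ y θ x

lemma fjoint_nonneg (hf₁ : ∀ t, 0 ≤ f₁ t) (hf₂ : ∀ t, 0 ≤ f₂ t) (x : ℝ) :
    0 ≤ fjoint f₁ f₂ y θ x :=
  mul_nonneg (hf₁ _) (hf₂ _)

lemma cnorm_pos (hf₁ : ∀ t, 0 < f₁ t) (hf₂ : ∀ t, 0 < f₂ t)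
    (hint : Integrable (fjoint f₁ f₂ y θ)) : 0 < cnorm f₁ f₂ y θ := by
  have support_eq : Function.support (fjoint f₁ f₂ y θ) = univ :=
    eq_univ_of_forall fun x => (mul_pos (hf₁ (y - x)) (hf₂ (x - θ))).ne'
  rw [cnorm, integral_pos_iff_support_of_nonneg
    (fjoint_nonneg (fun t => (hf₁ t).le) fun t => (hf₂ t).le) hint, support_eq]
  simp

lemma posteriorMass_le_one (hf₁ : ∀ t, 0 ≤ f₁ t) (hf₂ : ∀ t, 0 ≤ f₂ t)
    (hint : Integrable (fjoint f₁ f₂ y θ)) (hab : a ≤ b) :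
    posteriorMass f₁ f₂ y a b θ ≤ 1 := by
  have joint_nonneg : ∀ x, 0 ≤ fjoint f₁ f₂ y θ x := fjoint_nonneg hf₁ hf₂
  rw [posteriorMass, one_div_mul_eq_div, intervalIntegral.integral_of_le hab]
  exact div_le_one_of_le₀ (setIntegral_le_integral hint (ae_of_all _ joint_nonneg))
    (integral_nonneg joint_nonneg)

end General

lemma cauchyD_eq_cauchyPDFReal : cauchyD = ProbabilityTheory.cauchyPDFReal 0 1 := by
  ext t
  simp [cauchyD, ProbabilityTheory.cauchyPDFReal_def', mul_comm]

lemma cauchyD_pos (t : ℝ) : 0 < cauchyD t := by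
  rw [cauchyD]
  positivity

lemma cauchyD_nonneg (t : ℝ) : 0 ≤ cauchyD t :=
  (cauchyD_pos t).le

@[fun_prop]
lemma continuous_cauchyD : Continuous cauchyD := by
  unfold cauchyD
  exact continuous_const.div (by fun_prop) fun t => by positivity

lemma integrable_cauchyD : Integrable cauchyD :=
  cauchyD_eq_cauchyPDFReal ▸ ProbabilityTheory.integrable_cauchyPDFReal 0

lemma integral_cauchyD : ∫ t, cauchyD t = 1 :=
  cauchyD_eq_cauchyPDFReal ▸ ProbabilityTheory.integral_cauchyPDFReal_eq_one 0 one_ne_zero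

lemma cauchyD_mul_cauchyD_le (s t : ℝ) :
    cauchyD s * cauchyD t ≤ 2 * cauchyD (s + t) * (cauchyD s + cauchyD t) := by
  have one_add_sq_le : 1 + (s + t) ^ 2 ≤ 2 * ((1 + s ^ 2) + (1 + t ^ 2)) := by
    linarith [add_sq_le (a := s) (b := t)]
  unfold cauchyD
  field_simp
  linarith

lemma pi_div_two_mul_cauchyD_mul_cauchyD_le (s t : ℝ) :
    Real.pi / 2 * (cauchyD s * cauchyD t) ≤ cauchyD (s + t) := by
  have one_add_sq_le : 1 + (s + t) ^ 2 ≤ 2 * ((1 + s ^ 2) * (1 + t ^ 2)) := by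
    linarith [sq_nonneg (s - t), sq_nonneg (s * t)]
  unfold cauchyD
  field_simp
  linarith

section CauchyCauchy

variable (y θ : ℝ)

lemma fjoint_cauchyD_le (x : ℝ) :
    fjoint cauchyD cauchyD y θ x ≤
      2 * cauchyD (y - θ) * (cauchyD (y - x) + cauchyD (x - θ)) := by
  simpa only [fjoint, sub_add_sub_cancel] using cauchyD_mul_cauchyD_le (y - x) (x - θ)

lemma le_fjoint_cauchyD (x : ℝ) :
    Real.pi / 2 * cauchyD (y - θ) * (cauchyD (y - x) * cauchyD (x - y)) ≤
      fjoint cauchyD cauchyD y θ x := by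
  have slow_variation : Real.pi / 2 * (cauchyD (x - y) * cauchyD (y - θ)) ≤ cauchyD (x - θ) := by
    simpa only [sub_add_sub_cancel] using pi_div_two_mul_cauchyD_mul_cauchyD_le (x - y) (y - θ)
  calc
    _ = cauchyD (y - x) * (Real.pi / 2 * (cauchyD (x - y) * cauchyD (y - θ))) := by ring
    _ ≤ cauchyD (y - x) * cauchyD (x - θ) :=
      mul_le_mul_of_nonneg_left slow_variation (cauchyD_nonneg _)

lemma continuous_fjoint_cauchyD : Continuous (fjoint cauchyD cauchyD y θ) := by
  unfold fjoint
  fun_prop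

lemma integrable_cauchyD_sub_add_cauchyD_sub :
    Integrable fun x => cauchyD (y - x) + cauchyD (x - θ) :=
  (integrable_cauchyD.comp_sub_left y).add (integrable_cauchyD.comp_sub_right θ)

lemma integral_cauchyD_sub_add_cauchyD_sub :
    ∫ x, (cauchyD (y - x) + cauchyD (x - θ)) = 2 := by
  rw [integral_add (integrable_cauchyD.comp_sub_left y) (integrable_cauchyD.comp_sub_right θ),
    integral_sub_left_eq_self cauchyD, integral_sub_right_eq_self cauchyD, integral_cauchyD]
  norm_num

lemma integrable_fjoint_cauchyD : Integrable (fjoint cauchyD cauchyD y θ) := by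
  refine ((integrable_cauchyD_sub_add_cauchyD_sub y θ).const_mul (2 * cauchyD (y - θ))).mono'
    (continuous_fjoint_cauchyD y θ).aestronglyMeasurable (ae_of_all _ fun x => ?_)
  rw [Real.norm_of_nonneg (fjoint_nonneg cauchyD_nonneg cauchyD_nonneg x)]
  exact fjoint_cauchyD_le y θ x

lemma cnorm_cauchyD_le : cnorm cauchyD cauchyD y θ ≤ 4 * cauchyD (y - θ) :=
  calc
    _ ≤ ∫ x, 2 * cauchyD (y - θ) * (cauchyD (y - x) + cauchyD (x - θ)) :=
      integral_mono (integrable_fjoint_cauchyD y θ)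
        ((integrable_cauchyD_sub_add_cauchyD_sub y θ).const_mul _) (fjoint_cauchyD_le y θ)
    _ = 4 * cauchyD (y - θ) := by
      rw [integral_const_mul, integral_cauchyD_sub_add_cauchyD_sub]
      ring

variable {a b : ℝ}

lemma le_integral_fjoint_cauchyD (hab : a ≤ b) :
    Real.pi / 2 * cauchyD (y - θ) * ∫ x in a..b, cauchyD (y - x) * cauchyD (x - y) ≤
      ∫ x in a..b, fjoint cauchyD cauchyD y θ x := by
  rw [← intervalIntegral.integral_const_mul]
  exact intervalIntegral.integral_mono hab
    (Continuous.intervalIntegrable (by fun_prop) a b)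
    ((continuous_fjoint_cauchyD y θ).intervalIntegrable a b) (le_fjoint_cauchyD y θ)

lemma le_posteriorMass_cauchyD (hab : a ≤ b) :
    Real.pi / 8 * ∫ x in a..b, cauchyD (y - x) * cauchyD (x - y) ≤
      posteriorMass cauchyD cauchyD y a b θ := by
  set m := ∫ x in a..b, cauchyD (y - x) * cauchyD (x - y)
  have m_nonneg : 0 ≤ m := intervalIntegral.integral_nonneg hab fun x _ =>
    mul_nonneg (cauchyD_nonneg (y - x)) (cauchyD_nonneg (x - y))
  rw [posteriorMass, one_div_mul_eq_div,
    le_div_iff₀ (cnorm_pos cauchyD_pos cauchyD_pos (integrable_fjoint_cauchyD y θ))]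
  calc
    _ ≤ Real.pi / 8 * m * (4 * cauchyD (y - θ)) := by
      gcongr
      exact cnorm_cauchyD_le y θ
    _ = Real.pi / 2 * cauchyD (y - θ) * m := by ring
    _ ≤ _ := le_integral_fjoint_cauchyD y θ hab

lemma liminf_posteriorMass_cauchyD_pos (l : Filter ℝ) [l.NeBot] (hab : a < b) :
    0 < liminf (posteriorMass cauchyD cauchyD y a b) l := by
  have overlap_pos : 0 < ∫ x in a..b, cauchyD (y - x) * cauchyD (x - y) :=
    intervalIntegral.intervalIntegral_pos_of_pos
      (Continuous.intervalIntegrable (by fun_prop) a b)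
      (fun x => mul_pos (cauchyD_pos (y - x)) (cauchyD_pos (x - y))) hab
  have mass_le_one (θ : ℝ) : posteriorMass cauchyD cauchyD y a b θ ≤ 1 :=
    posteriorMass_le_one cauchyD_nonneg cauchyD_nonneg (integrable_fjoint_cauchyD y θ) hab.le
  calc
    0 < Real.pi / 8 * ∫ x in a..b, cauchyD (y - x) * cauchyD (x - y) := by positivity
    _ ≤ _ := le_liminf_of_le (isBoundedUnder_of ⟨1, mass_le_one⟩).isCoboundedUnder_ge
      (Eventually.of_forall fun θ => le_posteriorMass_cauchyD y θ hab.le)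

end CauchyCauchy

theorem cauchy_cauchy_ptip_general (y : ℝ) :
    (∀ (l : Filter ℝ) [l.NeBot] (a b : ℝ), a < b →
      0 < liminf (posteriorMass cauchyD cauchyD y a b) l) ∧
    (∀ θ : ℝ, cnorm cauchyD cauchyD y θ ≤ 4 / (Real.pi * (1 + (y - θ) ^ 2))) :=
  ⟨fun l _ _ _ hab => liminf_posteriorMass_cauchyD_pos y l hab,
    fun θ => (cnorm_cauchyD_le y θ).trans_eq (mul_one_div _ _)⟩

/-- in the Cauchy–Cauchy model the centred parametrisation is PTIP: for
every `k > 0` the posterior mass of `[y - k, y + k]` has a strictly positive liminf as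
`|θ| → ∞`; moreover, for `θ > y`, `c_θ ≤ 4 / (π (1 + (y - θ)²))`. -/
theorem cauchy_cauchy_ptip (y : ℝ) :
    (∀ k : ℝ, 0 < k →
      0 < liminf (fun θ =>
            (1 / cnorm cauchyD cauchyD y θ) * ∫ x in (y - k)..(y + k), fjoint cauchyD cauchyD y θ x)
          (cocompact ℝ)) ∧
    (∀ θ : ℝ, y < θ → cnorm cauchyD cauchyD y θ ≤ 4 / (Real.pi * (1 + (y - θ) ^ 2))) := by
  exact ⟨fun k hk => (cauchy_cauchy_ptip_general y).1 (cocompact ℝ) _ _ (by linarith),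
    fun θ _ => (cauchy_cauchy_ptip_general y).2 θ⟩
end
end

section
/- In the Gaussian–double-exponential model, where f₁(t) = (2πσ₁²)^{−1/2} e^{−t²/(2σ₁²)} and f₂(t) = (1/(2σ₂)) e^{−|t|/σ₂} with σ₁, σ₂ > 0 and y ∈ ℝ fixed, the conditional posterior of X given Θ = θ converges, as θ → +∞, to the N(y + σ₁²/σ₂, σ₁²) law pointwise at the level of densities: for every x ∈ ℝ, f_θ(x)/c_θ → (2πσ₁²)^{−1/2} exp(−(x − y − σ₁²/σ₂)²/(2σ₁²)) as θ → +∞, where f_θ(x) = f₁(y − x)·f₂(x − θ) and c_θ = ∫_ℝ f_θ(x) dx. (By symmetry, as θ → −∞ the limit is the N(y − σ₁²/σ₂, σ₁²) density.) -/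
open MeasureTheory Filter

noncomputable section

/-- Gaussian density with mean `0` and standard deviation `σ`. -/
def gaussD (σ t : ℝ) : ℝ := (Real.sqrt (2 * Real.pi * σ ^ 2))⁻¹ * Real.exp (-t ^ 2 / (2 * σ ^ 2))

/-- Double exponential (Laplace) density with scale `σ`. -/
def laplD (σ t : ℝ) : ℝ := (1 / (2 * σ)) * Real.exp (-|t| / σ)

/-!
For `θ ≥ 0` the ratio `laplD σ₂ (x - θ) / laplD σ₂ θ` is at most `exp (x / σ₂)`, with equality as
soon as `θ ≥ x`. Dividing numerator and denominator of the posterior by `laplD σ₂ θ`, dominated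
convergence shows that it tends to the normalised exponential tilt `f₁ (y - x) * exp (x / σ₂)`, for
any `f₁` whose tilt is integrable with nonzero integral. Tilting a Gaussian density merely
translates and rescales it, by completing the square.
-/

theorem fjoint_div (f₁ f₂ : ℝ → ℝ) (y θ x a : ℝ) :
    fjoint f₁ f₂ y θ x / a = f₁ (y - x) * (f₂ (x - θ) / a) :=
  mul_div_assoc _ _ _

theorem aestronglyMeasurable_fjoint {f₁ f₂ : ℝ → ℝ} (hf₁ : AEStronglyMeasurable f₁)
    (hf₂ : AEStronglyMeasurable f₂) (y θ : ℝ) :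
    AEStronglyMeasurable (fjoint f₁ f₂ y θ) :=
  (hf₁.comp_quasiMeasurePreserving (quasiMeasurePreserving_sub_left volume y)).mul
    (hf₂.comp_measurePreserving (measurePreserving_sub_right volume θ))

section Limit

variable {f₁ f₂ a b w : ℝ → ℝ} {y : ℝ} {l : Filter ℝ}

theorem tendsto_fjoint_div (f₁ : ℝ → ℝ) (y : ℝ) {x c : ℝ}
    (hlim : Tendsto (fun θ => f₂ (x - θ) / a θ) l (nhds c)) :
    Tendsto (fun θ => fjoint f₁ f₂ y θ x / a θ) l (nhds (f₁ (y - x) * c)) := by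
  simpa only [fjoint_div] using hlim.const_mul (f₁ (y - x))

theorem tendsto_cnorm_div [l.IsCountablyGenerated] (hf₁ : AEStronglyMeasurable f₁)
    (hf₂ : AEStronglyMeasurable f₂) (hbound : ∀ᶠ θ in l, ∀ t, |f₂ (t - θ) / a θ| ≤ b t)
    (hlim : ∀ t, Tendsto (fun θ => f₂ (t - θ) / a θ) l (nhds (w t)))
    (hint : Integrable fun t => f₁ (y - t) * b t) :
    Tendsto (fun θ => cnorm f₁ f₂ y θ / a θ) l (nhds (∫ t, f₁ (y - t) * w t)) := by
  simp only [cnorm, ← integral_div]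
  refine tendsto_integral_filter_of_dominated_convergence (fun t => ‖f₁ (y - t) * b t‖) ?_ ?_
    hint.norm ?_
  · exact .of_forall fun θ =>
      (aestronglyMeasurable_fjoint hf₁ hf₂ y θ).aemeasurable.div_const (a θ) |>.aestronglyMeasurable
  · filter_upwards [hbound] with θ hθ
    refine ae_of_all _ fun t => ?_
    rw [fjoint_div, norm_mul, norm_mul]
    gcongr
    exact (hθ t).trans (le_abs_self _)
  · exact ae_of_all _ fun t => tendsto_fjoint_div f₁ y (hlim t)

theorem tendsto_fjoint_div_cnorm [l.IsCountablyGenerated] (hf₁ : AEStronglyMeasurable f₁)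
    (hf₂ : AEStronglyMeasurable f₂) (ha : ∀ᶠ θ in l, a θ ≠ 0)
    (hbound : ∀ᶠ θ in l, ∀ t, |f₂ (t - θ) / a θ| ≤ b t)
    (hlim : ∀ t, Tendsto (fun θ => f₂ (t - θ) / a θ) l (nhds (w t)))
    (hint : Integrable fun t => f₁ (y - t) * b t) (hne : ∫ t, f₁ (y - t) * w t ≠ 0) (x : ℝ) :
    Tendsto (fun θ => fjoint f₁ f₂ y θ x / cnorm f₁ f₂ y θ) l
      (nhds (f₁ (y - x) * w x / ∫ t, f₁ (y - t) * w t)) := by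
  have hratio := (tendsto_fjoint_div f₁ y (hlim x)).div
    (tendsto_cnorm_div hf₁ hf₂ hbound hlim hint) hne
  refine hratio.congr' ?_
  filter_upwards [ha] with θ hθ
  exact div_div_div_cancel_right₀ hθ _ _

end Limit

section Laplace

variable {σ θ : ℝ}

theorem continuous_laplD (σ : ℝ) : Continuous (laplD σ) := by
  unfold laplD
  fun_prop

theorem laplD_pos (hσ : 0 < σ) (t : ℝ) : 0 < laplD σ t := by
  unfold laplD
  positivity

theorem laplD_div_laplD (hσ : σ ≠ 0) (s t : ℝ) :
    laplD σ s / laplD σ t = Real.exp (σ⁻¹ * (|t| - |s|)) := by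
  unfold laplD
  rw [mul_div_mul_left _ _ (by positivity), ← Real.exp_sub]
  congr 1
  ring

theorem laplD_sub_div_laplD_le (hσ : 0 < σ) (hθ : 0 ≤ θ) (x : ℝ) :
    laplD σ (x - θ) / laplD σ θ ≤ Real.exp (σ⁻¹ * x) := by
  rw [laplD_div_laplD hσ.ne', abs_of_nonneg hθ]
  gcongr
  linarith [neg_abs_le (x - θ)]

theorem laplD_sub_div_laplD_of_le {x : ℝ} (hσ : σ ≠ 0) (hθ : 0 ≤ θ) (hx : x ≤ θ) :
    laplD σ (x - θ) / laplD σ θ = Real.exp (σ⁻¹ * x) := by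
  rw [laplD_div_laplD hσ, abs_of_nonneg hθ, abs_of_nonpos (sub_nonpos.mpr hx)]
  congr 2
  ring

theorem tendsto_laplD_sub_div_laplD (hσ : σ ≠ 0) (x : ℝ) :
    Tendsto (fun θ => laplD σ (x - θ) / laplD σ θ) atTop (nhds (Real.exp (σ⁻¹ * x))) := by
  refine tendsto_const_nhds.congr' ?_
  filter_upwards [eventually_ge_atTop 0, eventually_ge_atTop x] with θ hθ hx
  exact (laplD_sub_div_laplD_of_le hσ hθ hx).symm

theorem tendsto_fjoint_laplD_div_cnorm {f₁ : ℝ → ℝ} {y : ℝ} (hσ : 0 < σ)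
    (hf₁ : AEStronglyMeasurable f₁) (hint : Integrable fun t => f₁ (y - t) * Real.exp (σ⁻¹ * t))
    (hne : ∫ t, f₁ (y - t) * Real.exp (σ⁻¹ * t) ≠ 0) (x : ℝ) :
    Tendsto (fun θ => fjoint f₁ (laplD σ) y θ x / cnorm f₁ (laplD σ) y θ) atTop
      (nhds (f₁ (y - x) * Real.exp (σ⁻¹ * x) / ∫ t, f₁ (y - t) * Real.exp (σ⁻¹ * t))) := by
  refine tendsto_fjoint_div_cnorm hf₁ (continuous_laplD σ).aestronglyMeasurable
    (.of_forall fun θ => (laplD_pos hσ θ).ne') ?_ (tendsto_laplD_sub_div_laplD hσ.ne') hint hne x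
  filter_upwards [eventually_ge_atTop 0] with θ hθ t
  rw [abs_of_pos (div_pos (laplD_pos hσ _) (laplD_pos hσ _))]
  exact laplD_sub_div_laplD_le hσ hθ t

end Laplace

section Gaussian

variable {σ : ℝ}

theorem gaussD_eq_gaussianPDFReal (σ : ℝ) :
    gaussD σ = ProbabilityTheory.gaussianPDFReal 0 (σ ^ 2).toNNReal := by
  ext t
  simp only [gaussD, ProbabilityTheory.gaussianPDFReal, Real.coe_toNNReal _ (sq_nonneg σ), sub_zero]

theorem integrable_gaussD (σ : ℝ) : Integrable (gaussD σ) := by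
  rw [gaussD_eq_gaussianPDFReal]
  exact ProbabilityTheory.integrable_gaussianPDFReal _ _

theorem integral_gaussD (hσ : σ ≠ 0) : ∫ t, gaussD σ t = 1 := by
  rw [gaussD_eq_gaussianPDFReal]
  exact ProbabilityTheory.integral_gaussianPDFReal_eq_one _
    (Real.toNNReal_pos.mpr (by positivity)).ne'

theorem gaussD_sub_mul_exp (hσ : σ ≠ 0) (y s x : ℝ) :
    gaussD σ (y - x) * Real.exp (s * x) =
      Real.exp (s * y + s ^ 2 * σ ^ 2 / 2) * gaussD σ (x - (y + σ ^ 2 * s)) := by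
  unfold gaussD
  rw [mul_assoc, mul_left_comm (Real.exp _), ← Real.exp_add, ← Real.exp_add]
  congr 2
  field_simp
  ring

theorem integrable_gaussD_sub_mul_exp (hσ : σ ≠ 0) (y s : ℝ) :
    Integrable fun x => gaussD σ (y - x) * Real.exp (s * x) := by
  simp only [gaussD_sub_mul_exp hσ]
  exact ((integrable_gaussD σ).comp_sub_right _).const_mul _

theorem integral_gaussD_sub_mul_exp (hσ : σ ≠ 0) (y s : ℝ) :
    ∫ x, gaussD σ (y - x) * Real.exp (s * x) = Real.exp (s * y + s ^ 2 * σ ^ 2 / 2) := by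
  simp only [gaussD_sub_mul_exp hσ]
  rw [integral_const_mul, integral_sub_right_eq_self (gaussD σ), integral_gaussD hσ, mul_one]

end Gaussian

/-- in the Gaussian–double-exponential model, as `θ → +∞` the conditional
posterior density of `X` given `Θ = θ` converges pointwise to the
`N(y + σ₁²/σ₂, σ₁²)` density. -/
theorem gaussian_laplace_posterior_limit (σ₁ σ₂ y : ℝ) (h₁ : 0 < σ₁) (h₂ : 0 < σ₂) :
    ∀ x : ℝ,
      Tendsto (fun θ =>
          fjoint (gaussD σ₁) (laplD σ₂) y θ x / cnorm (gaussD σ₁) (laplD σ₂) y θ)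
        atTop
        (nhds ((Real.sqrt (2 * Real.pi * σ₁ ^ 2))⁻¹ *
          Real.exp (-(x - y - σ₁ ^ 2 / σ₂) ^ 2 / (2 * σ₁ ^ 2)))) := by
  intro x
  have hne : ∫ t, gaussD σ₁ (y - t) * Real.exp (σ₂⁻¹ * t) ≠ 0 := by
    rw [integral_gaussD_sub_mul_exp h₁.ne']
    exact Real.exp_ne_zero _
  have hlim := tendsto_fjoint_laplD_div_cnorm h₂ (integrable_gaussD σ₁).aestronglyMeasurable
    (integrable_gaussD_sub_mul_exp h₁.ne' y σ₂⁻¹) hne x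
  rwa [integral_gaussD_sub_mul_exp h₁.ne', gaussD_sub_mul_exp h₁.ne',
    mul_div_cancel_left₀ _ (Real.exp_ne_zero _), ← div_eq_mul_inv, ← sub_sub] at hlim
end
end

section
/- In the exponential-power–exponential-power model, where fᵢ(t) = exp(−|t/σᵢ|^β)/Zᵢ for i = 1, 2 with β > 2, σ₁, σ₂ > 0 and Zᵢ normalising constants, set a = β/(β − 1) and ρ = σ₁^a/(σ₁^a + σ₂^a) (equivalently ρ/(1 − ρ) = (σ₁/σ₂)^a). Fix y ∈ ℝ. Then: (i) as |θ| → ∞ the conditional posterior of X given Θ = θ concentrates at ρθ + (1 − ρ)y, i.e. for every ε > 0, ∫_{{x : |x − ρθ − (1−ρ)y| > ε}} f_θ(x)/c_θ dx → 0; and (ii) for every ε > 0 there exists k > 0 such that for all |θ| > k, ∫_ℝ |x − y|·(f_θ(x)/c_θ) dx ≤ (1 + ε)·ρ·|θ − y|. Here f_θ(x) = f₁(y − x)·f₂(x − θ) and c_θ = ∫_ℝ f_θ(x) dx. -/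
open MeasureTheory Filter Set

noncomputable section

/-- Exponential-power density with scale `σ` and shape `β` (normalised). -/
def epD (σ β t : ℝ) : ℝ :=
  Real.exp (-(|t| / σ) ^ β) / ∫ u : ℝ, Real.exp (-(|u| / σ) ^ β)

/-!
Up to normalisation the posterior density is `exp (-V)` with
`V x = (|y - x| / σ₁) ^ β + (|x - θ| / σ₂) ^ β`. The weight `ρ` is chosen so that
`m = ρ θ + (1 - ρ) y` is a critical point of the convex function `V`. Bernoulli's inequality
upgrades the tangent inequality for `|·| ^ β` at `m` to a quadratic one, `V m + Q (x - m)² ≤ V x`,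
where `Q` is a positive multiple of `|θ - y| ^ (β - 2)` and hence tends to infinity because `β > 2`.

For a convex `V` with this growth, `exp (-V (m + 2 v)) ≤ exp (-V (m + v)) exp (-Q v²)`, and
substituting `x = m + 2 v` bounds the posterior mean of `|x - m|` by a constant times `1 / √Q`.
Markov's inequality then gives the concentration, and the triangle inequality the moment bound.
-/

section LogConcave

variable {E : Type*} [NormedAddCommGroup E]

/-- `V` grows at least quadratically, with rate `Q`, away from its value at `m`: the one-point form
of strong convexity under which the density proportional to `exp (-V)` concentrates at `m`. -/
def HasQuadraticGrowth (V : E → ℝ) (m : E) (Q : ℝ) : Prop :=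
  ∀ x, V m + Q * ‖x - m‖ ^ 2 ≤ V x

lemma mul_exp_neg_mul_sq_le {Q : ℝ} (hQ : 0 < Q) (r : ℝ) :
    r * Real.exp (-Q * r ^ 2) ≤ 1 / √Q := by
  have hsqrt_mul : √Q * r ≤ Real.exp (Q * r ^ 2) := by
    have hsq : (√Q * r) ^ 2 = Q * r ^ 2 := by rw [mul_pow, Real.sq_sqrt hQ.le]
    nlinarith [Real.add_one_le_exp (Q * r ^ 2), sq_nonneg (√Q * r - 1)]
  rw [neg_mul, Real.exp_neg, ← div_eq_mul_inv,
    div_le_div_iff₀ (Real.exp_pos _) (Real.sqrt_pos.mpr hQ)]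
  linarith

section Growth

variable {V : E → ℝ} {m : E} {Q : ℝ}

lemma HasQuadraticGrowth.exp_neg_le (hV : HasQuadraticGrowth V m Q) (x : E) :
    Real.exp (-V x) ≤ Real.exp (-V m) * Real.exp (-Q * ‖x - m‖ ^ 2) := by
  rw [← Real.exp_add]
  exact Real.exp_le_exp.mpr (by linarith [hV x])

lemma HasQuadraticGrowth.exp_neg_add_two_smul_le [NormedSpace ℝ E]
    (hV : HasQuadraticGrowth V m Q) (hconv : ConvexOn ℝ univ V) (v : E) :
    Real.exp (-V (m + (2 : ℝ) • v)) ≤ Real.exp (-V (m + v)) * Real.exp (-Q * ‖v‖ ^ 2) := by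
  have hmid : V (m + v) ≤ 1 / 2 * V m + 1 / 2 * V (m + (2 : ℝ) • v) := by
    have h := hconv.2 (mem_univ m) (mem_univ (m + (2 : ℝ) • v))
      (by norm_num : (0 : ℝ) ≤ 1 / 2) (by norm_num : (0 : ℝ) ≤ 1 / 2) (by norm_num)
    have hpoint : (1 / 2 : ℝ) • m + (1 / 2 : ℝ) • (m + (2 : ℝ) • v) = m + v := by module
    rwa [hpoint] at h
  have hgrowth : V m + Q * ‖v‖ ^ 2 ≤ V (m + v) := by
    simpa only [add_sub_cancel_left] using hV (m + v)
  rw [← Real.exp_add]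
  exact Real.exp_le_exp.mpr (by linarith)

-- The Gaussian factor that convexity gains under dilation by `2` about `m` absorbs the norm.
lemma HasQuadraticGrowth.norm_two_smul_mul_exp_neg_le [NormedSpace ℝ E]
    (hV : HasQuadraticGrowth V m Q) (hQ : 0 < Q) (hconv : ConvexOn ℝ univ V) (v : E) :
    ‖(2 : ℝ) • v‖ * Real.exp (-V (m + (2 : ℝ) • v)) ≤ 2 / √Q * Real.exp (-V (m + v)) :=
  calc ‖(2 : ℝ) • v‖ * Real.exp (-V (m + (2 : ℝ) • v))
      ≤ ‖(2 : ℝ) • v‖ * (Real.exp (-V (m + v)) * Real.exp (-Q * ‖v‖ ^ 2)) := by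
        gcongr
        exact hV.exp_neg_add_two_smul_le hconv v
    _ = 2 * (‖v‖ * Real.exp (-Q * ‖v‖ ^ 2)) * Real.exp (-V (m + v)) := by
        rw [norm_smul, Real.norm_two]
        ring
    _ ≤ 2 * (1 / √Q) * Real.exp (-V (m + v)) := by
        gcongr
        exact mul_exp_neg_mul_sq_le hQ ‖v‖
    _ = 2 / √Q * Real.exp (-V (m + v)) := by ring

end Growth

variable [InnerProductSpace ℝ E] [FiniteDimensional ℝ E] [MeasurableSpace E] [BorelSpace E]

lemma integrable_exp_neg_mul_norm_sq {Q : ℝ} (hQ : 0 < Q) :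
    Integrable fun v : E => Real.exp (-Q * ‖v‖ ^ 2) := by
  refine Integrable.of_integral_ne_zero ?_
  rw [GaussianFourier.integral_rexp_neg_mul_sq_norm hQ]
  exact (Real.rpow_pos_of_pos (div_pos Real.pi_pos hQ) _).ne'

lemma integrable_norm_mul_exp_neg_mul_norm_sq {Q : ℝ} (hQ : 0 < Q) :
    Integrable fun v : E => ‖v‖ * Real.exp (-Q * ‖v‖ ^ 2) := by
  refine ((integrable_exp_neg_mul_norm_sq (half_pos hQ)).const_mul (1 / √(Q / 2))).mono'
    (by fun_prop) (Eventually.of_forall fun v => ?_)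
  have hsplit : Real.exp (-Q * ‖v‖ ^ 2) =
      Real.exp (-(Q / 2) * ‖v‖ ^ 2) * Real.exp (-(Q / 2) * ‖v‖ ^ 2) := by
    rw [← Real.exp_add]
    ring_nf
  rw [Real.norm_of_nonneg (by positivity), hsplit, ← mul_assoc]
  gcongr
  exact mul_exp_neg_mul_sq_le (half_pos hQ) ‖v‖

variable {V : E → ℝ} {m : E} {Q : ℝ}

lemma HasQuadraticGrowth.integrable_exp_neg (hV : HasQuadraticGrowth V m Q) (hQ : 0 < Q)
    (hmeas : Measurable V) : Integrable fun x => Real.exp (-V x) := by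
  refine (((integrable_exp_neg_mul_norm_sq hQ).comp_sub_right m).const_mul
    (Real.exp (-V m))).mono' (by fun_prop) (Eventually.of_forall fun x => ?_)
  rw [Real.norm_of_nonneg (Real.exp_nonneg _)]
  exact hV.exp_neg_le x

lemma HasQuadraticGrowth.integrable_norm_sub_mul_exp_neg (hV : HasQuadraticGrowth V m Q)
    (hQ : 0 < Q) (hmeas : Measurable V) :
    Integrable fun x => ‖x - m‖ * Real.exp (-V x) := by
  refine (((integrable_norm_mul_exp_neg_mul_norm_sq hQ).comp_sub_right m).const_mul
    (Real.exp (-V m))).mono' (by fun_prop) (Eventually.of_forall fun x => ?_)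
  rw [Real.norm_of_nonneg (by positivity), mul_left_comm]
  gcongr
  exact hV.exp_neg_le x

lemma HasQuadraticGrowth.integral_norm_sub_mul_exp_neg_le (hV : HasQuadraticGrowth V m Q)
    (hQ : 0 < Q) (hconv : ConvexOn ℝ univ V) :
    ∫ x, ‖x - m‖ * Real.exp (-V x) ≤
      2 ^ (Module.finrank ℝ E + 1) / √Q * ∫ x, Real.exp (-V x) := by
  have hmeas : Measurable V := hconv.locallyLipschitz.continuous.measurable
  have hint_translate : Integrable fun v => ‖v‖ * Real.exp (-V (m + v)) := by
    simpa only [add_sub_cancel_left] using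
      (hV.integrable_norm_sub_mul_exp_neg hQ hmeas).comp_add_left m
  have hdilate : ∫ v, ‖v‖ * Real.exp (-V (m + v)) =
      2 ^ Module.finrank ℝ E * ∫ v : E, ‖(2 : ℝ) • v‖ * Real.exp (-V (m + (2 : ℝ) • v)) := by
    rw [Measure.integral_comp_smul volume (fun v => ‖v‖ * Real.exp (-V (m + v)))]
    simp
  calc ∫ x, ‖x - m‖ * Real.exp (-V x)
      = ∫ v, ‖v‖ * Real.exp (-V (m + v)) := by
        rw [← integral_add_left_eq_self _ m]
        simp only [add_sub_cancel_left]
    _ = 2 ^ Module.finrank ℝ E * ∫ v : E, ‖(2 : ℝ) • v‖ * Real.exp (-V (m + (2 : ℝ) • v)) := hdilate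
    _ ≤ 2 ^ Module.finrank ℝ E * ∫ v, 2 / √Q * Real.exp (-V (m + v)) := by
        gcongr
        · exact hint_translate.comp_smul two_ne_zero
        · exact ((hV.integrable_exp_neg hQ hmeas).comp_add_left m).const_mul _
        · exact fun v => hV.norm_two_smul_mul_exp_neg_le hQ hconv v
    _ = 2 ^ (Module.finrank ℝ E + 1) / √Q * ∫ x, Real.exp (-V x) := by
        rw [integral_const_mul, integral_add_left_eq_self (fun x => Real.exp (-V x)) m]
        ring

lemma HasQuadraticGrowth.integrable_norm_sub_tilted (hV : HasQuadraticGrowth V m Q) (hQ : 0 < Q)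
    (hmeas : Measurable V) :
    Integrable (fun x => ‖x - m‖) (volume.tilted fun x => -V x) := by
  rw [integrable_tilted_iff (hV.integrable_exp_neg hQ hmeas)]
  simpa only [smul_eq_mul, mul_comm] using hV.integrable_norm_sub_mul_exp_neg hQ hmeas

lemma HasQuadraticGrowth.integral_norm_sub_tilted_le (hV : HasQuadraticGrowth V m Q) (hQ : 0 < Q)
    (hconv : ConvexOn ℝ univ V) :
    ∫ x, ‖x - m‖ ∂(volume.tilted fun x => -V x) ≤ 2 ^ (Module.finrank ℝ E + 1) / √Q := by
  have hmean : ∫ x, ‖x - m‖ ∂(volume.tilted fun x => -V x) =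
      (∫ x, ‖x - m‖ * Real.exp (-V x)) / ∫ x, Real.exp (-V x) := by
    rw [integral_tilted, ← integral_div]
    exact integral_congr_ae (Eventually.of_forall fun x => by simp only [smul_eq_mul]; ring)
  rw [hmean]
  exact div_le_of_le_mul₀ (integral_nonneg fun _ => Real.exp_nonneg _) (by positivity)
    (hV.integral_norm_sub_mul_exp_neg_le hQ hconv)

end LogConcave

section Concentration

lemma tendsto_measureReal_lt_of_tendsto_integral {ι α : Type*} [MeasurableSpace α] {l : Filter ι}
    {μ : ι → Measure α} [∀ i, IsFiniteMeasure (μ i)] {f : ι → α → ℝ} (hf : ∀ i x, 0 ≤ f i x)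
    (hint : ∀ᶠ i in l, Integrable (f i) (μ i))
    (hlim : Tendsto (fun i => ∫ x, f i x ∂(μ i)) l (nhds 0)) {ε : ℝ} (hε : 0 < ε) :
    Tendsto (fun i => (μ i).real {x | ε < f i x}) l (nhds 0) := by
  refine squeeze_zero' (Eventually.of_forall fun _ => measureReal_nonneg) ?_
    (zero_div ε ▸ hlim.div_const ε)
  filter_upwards [hint] with i hi
  have hmarkov := mul_meas_ge_le_integral_of_nonneg (Eventually.of_forall (hf i)) hi ε
  have hsubset : (μ i).real {x | ε < f i x} ≤ (μ i).real {x | ε ≤ f i x} :=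
    measureReal_mono (ofPred_subset_ofPred_of_imp fun _ => le_of_lt)
  rw [le_div_iff₀ hε]
  nlinarith

lemma integral_dist_le_add_dist {α : Type*} [PseudoMetricSpace α] [MeasurableSpace α]
    {μ : Measure α} [IsProbabilityMeasure μ] {m : α} (hint : Integrable (fun x => dist x m) μ)
    (y : α) : ∫ x, dist x y ∂μ ≤ ∫ x, dist x m ∂μ + dist m y :=
  calc ∫ x, dist x y ∂μ ≤ ∫ x, (dist x m + dist m y) ∂μ :=
        integral_mono_of_nonneg (Eventually.of_forall fun _ => dist_nonneg)
          (hint.add (integrable_const _)) (Eventually.of_forall fun x => dist_triangle x m y)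
    _ = ∫ x, dist x m ∂μ + dist m y := by
        rw [integral_add hint (integrable_const _), integral_const, probReal_univ, one_smul]

lemma exists_pos_forall_lt_norm_of_eventually_cocompact {E : Type*} [NormedAddCommGroup E]
    [ProperSpace E] {P : E → Prop} (h : ∀ᶠ x in cocompact E, P x) :
    ∃ k > (0 : ℝ), ∀ x, k < ‖x‖ → P x := by
  rw [← Metric.cobounded_eq_cocompact, hasBasis_cobounded_norm.eventually_iff] at h
  obtain ⟨r, -, hr⟩ := h
  exact ⟨max r 1, by positivity, fun x hx => hr ((le_max_left r 1).trans hx.le)⟩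

lemma eventually_ne_cocompact {X : Type*} [TopologicalSpace X] (y : X) :
    ∀ᶠ x in cocompact X, x ≠ y :=
  isCompact_singleton.compl_mem_cocompact

lemma tendsto_norm_sub_cocompact_atTop {E : Type*} [NormedAddCommGroup E] [ProperSpace E] (y : E) :
    Tendsto (fun x => ‖x - y‖) (cocompact E) atTop :=
  tendsto_norm_cocompact_atTop.comp (Homeomorph.subRight y).isClosedEmbedding.tendsto_cocompact

end Concentration

section PowerInequalities

lemma rpow_add_mul_sub_le_rpow {p t u : ℝ} (hp : 1 ≤ p) (ht : 0 ≤ t) (hu : 0 ≤ u) :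
    t ^ p + p * t ^ (p - 1) * (u - t) ≤ u ^ p := by
  rcases ht.eq_or_lt with rfl | ht
  · rcases hp.eq_or_lt with rfl | hp
    · simp
    · simpa [Real.zero_rpow (by linarith : p ≠ 0), Real.zero_rpow (by linarith : p - 1 ≠ 0)]
        using Real.rpow_nonneg hu p
  · have hbernoulli : 1 + p * (u / t - 1) ≤ (u / t) ^ p := by
      simpa only [add_sub_cancel] using
        one_add_mul_self_le_rpow_one_add (by linarith [div_nonneg hu ht.le] : -1 ≤ u / t - 1) hp
    calc t ^ p + p * t ^ (p - 1) * (u - t) = t ^ p * (1 + p * (u / t - 1)) := by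
          rw [Real.rpow_sub_one ht.ne']
          field_simp
      _ ≤ t ^ p * (u / t) ^ p := by gcongr
      _ = u ^ p := by
          rw [Real.div_rpow hu ht.le, mul_div_cancel₀ _ (Real.rpow_pos_of_pos ht p).ne']

-- The tangent inequality for `t ↦ t ^ (β / 2)` at `t = ‖a‖²`, evaluated at `‖a + b‖²`.
lemma norm_rpow_add_inner_add_norm_sq_le {E : Type*} [NormedAddCommGroup E] [InnerProductSpace ℝ E]
    {β : ℝ} (hβ : 2 ≤ β) (a b : E) :
    ‖a‖ ^ β + β * ‖a‖ ^ (β - 2) * inner ℝ a b + β / 2 * ‖a‖ ^ (β - 2) * ‖b‖ ^ 2 ≤ ‖a + b‖ ^ β := by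
  have hpow (r : ℝ) (hr : 0 ≤ r) (q : ℝ) : (r ^ 2) ^ (q / 2) = r ^ q := by
    rw [← Real.rpow_natCast_mul hr]
    congr 1
    push_cast
    ring
  have h := rpow_add_mul_sub_le_rpow (by linarith : 1 ≤ β / 2) (sq_nonneg ‖a‖) (sq_nonneg ‖a + b‖)
  rw [show β / 2 - 1 = (β - 2) / 2 by ring, hpow _ (norm_nonneg a), hpow _ (norm_nonneg a),
    hpow _ (norm_nonneg (a + b)), norm_add_sq_real] at h
  linarith

lemma abs_div_rpow_quadratic_le {β σ : ℝ} (hβ : 2 ≤ β) (hσ : 0 < σ) (a b : ℝ) :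
    (|a| / σ) ^ β + β * (|a| ^ (β - 2) * a / σ ^ β) * b + β / 2 * |a| ^ (β - 2) / σ ^ β * b ^ 2 ≤
      (|a + b| / σ) ^ β := by
  have h := norm_rpow_add_inner_add_norm_sq_le hβ a b
  simp only [Real.norm_eq_abs, sq_abs, RCLike.inner_apply, conj_trivial] at h
  rw [Real.div_rpow (abs_nonneg a) hσ.le, Real.div_rpow (abs_nonneg _) hσ.le]
  have hscaled := div_le_div_of_nonneg_right h (Real.rpow_nonneg hσ.le β)
  refine le_of_eq_of_le ?_ hscaled
  ring

lemma convexOn_rpow_comp {E : Type*} [AddCommMonoid E] [Module ℝ E] {s : Set E} {f : E → ℝ} {p : ℝ}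
    (hf : ConvexOn ℝ s f) (hnonneg : ∀ x ∈ s, 0 ≤ f x) (hp : 1 ≤ p) :
    ConvexOn ℝ s fun x => f x ^ p := by
  refine ⟨hf.1, fun x hx y hy a b ha hb hab => ?_⟩
  calc f (a • x + b • y) ^ p ≤ (a • f x + b • f y) ^ p :=
        Real.rpow_le_rpow (hnonneg _ (hf.1 hx hy ha hb hab)) (hf.2 hx hy ha hb hab) (by linarith)
    _ ≤ a • f x ^ p + b • f y ^ p :=
        (convexOn_rpow hp).2 (hnonneg x hx) (hnonneg y hy) ha hb hab

end PowerInequalities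

section Model

variable {σ₁ σ₂ β : ℝ}

/-- The potential `V` of the model: the posterior density of `X` given `Θ = θ` is proportional to
`exp (-V)`. -/
def expPowerPotential (σ₁ σ₂ β y θ x : ℝ) : ℝ := (|y - x| / σ₁) ^ β + (|x - θ| / σ₂) ^ β

/-- The conditional posterior law of `X` given `Θ = θ`. It is the zero measure if `exp (-V)` is not
integrable. -/
def expPowerPosterior (σ₁ σ₂ β y θ : ℝ) : Measure ℝ :=
  volume.tilted fun x => -expPowerPotential σ₁ σ₂ β y θ x

/-- The weight `ρ = σ₁ ^ a / (σ₁ ^ a + σ₂ ^ a)`, `a = β / (β - 1)`, of `θ` in the posterior mode. -/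
def expPowerWeight (σ₁ σ₂ β : ℝ) : ℝ :=
  σ₁ ^ (β / (β - 1)) / (σ₁ ^ (β / (β - 1)) + σ₂ ^ (β / (β - 1)))

/-- The posterior mode `ρ θ + (1 - ρ) y`, at which the posterior concentrates. -/
def expPowerMode (σ₁ σ₂ β y θ : ℝ) : ℝ :=
  expPowerWeight σ₁ σ₂ β * θ + (1 - expPowerWeight σ₁ σ₂ β) * y

lemma integral_exp_neg_abs_div_rpow_pos {σ : ℝ} (hσ : 0 < σ) (hβ : 0 < β) :
    0 < ∫ u : ℝ, Real.exp (-(|u| / σ) ^ β) := by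
  have hGamma : ∫ u in Ioi (0 : ℝ), Real.exp (-(u / σ) ^ β) =
      ((σ ^ β)⁻¹) ^ (-1 / β) * Real.Gamma (1 / β + 1) := by
    rw [← integral_exp_neg_mul_rpow hβ (by positivity)]
    refine setIntegral_congr_fun measurableSet_Ioi fun u hu => ?_
    simp only [Real.div_rpow (le_of_lt hu) hσ.le]
    ring_nf
  rw [integral_comp_abs (f := fun u => Real.exp (-(u / σ) ^ β)), hGamma]
  have := Real.Gamma_pos_of_pos (by positivity : 0 < 1 / β + 1)
  positivity

lemma fjoint_div_cnorm_eq (hσ₁ : 0 < σ₁) (hσ₂ : 0 < σ₂) (hβ : 0 < β) (y θ x : ℝ) :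
    fjoint (epD σ₁ β) (epD σ₂ β) y θ x / cnorm (epD σ₁ β) (epD σ₂ β) y θ =
      Real.exp (-expPowerPotential σ₁ σ₂ β y θ x) /
        ∫ x, Real.exp (-expPowerPotential σ₁ σ₂ β y θ x) := by
  set Z := (∫ u : ℝ, Real.exp (-(|u| / σ₁) ^ β)) * ∫ u : ℝ, Real.exp (-(|u| / σ₂) ^ β)
  have hZ : Z ≠ 0 := (mul_pos (integral_exp_neg_abs_div_rpow_pos hσ₁ hβ)
    (integral_exp_neg_abs_div_rpow_pos hσ₂ hβ)).ne'
  have hjoint (x : ℝ) : fjoint (epD σ₁ β) (epD σ₂ β) y θ x =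
      Real.exp (-expPowerPotential σ₁ σ₂ β y θ x) / Z := by
    rw [fjoint, epD, epD, div_mul_div_comm, ← Real.exp_add, expPowerPotential, neg_add]
  simp only [cnorm, hjoint, integral_div]
  exact div_div_div_cancel_right₀ hZ _ _

lemma setIntegral_fjoint_div_cnorm (hσ₁ : 0 < σ₁) (hσ₂ : 0 < σ₂) (hβ : 0 < β) (y θ : ℝ)
    (s : Set ℝ) :
    ∫ x in s, fjoint (epD σ₁ β) (epD σ₂ β) y θ x / cnorm (epD σ₁ β) (epD σ₂ β) y θ =
      (expPowerPosterior σ₁ σ₂ β y θ).real s := by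
  simp only [fjoint_div_cnorm_eq hσ₁ hσ₂ hβ]
  rw [expPowerPosterior, Measure.real, tilted_apply_eq_ofReal_integral, ENNReal.toReal_ofReal]
  exact integral_nonneg fun x =>
    div_nonneg (Real.exp_nonneg _) (integral_nonneg fun _ => Real.exp_nonneg _)

lemma integral_mul_fjoint_div_cnorm (hσ₁ : 0 < σ₁) (hσ₂ : 0 < σ₂) (hβ : 0 < β) (y θ : ℝ)
    (g : ℝ → ℝ) :
    ∫ x, g x * (fjoint (epD σ₁ β) (epD σ₂ β) y θ x / cnorm (epD σ₁ β) (epD σ₂ β) y θ) =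
      ∫ x, g x ∂(expPowerPosterior σ₁ σ₂ β y θ) := by
  simp only [fjoint_div_cnorm_eq hσ₁ hσ₂ hβ, expPowerPosterior, integral_tilted, smul_eq_mul,
    mul_comm]

lemma measurable_expPowerPotential (σ₁ σ₂ β y θ : ℝ) :
    Measurable (expPowerPotential σ₁ σ₂ β y θ) := by
  unfold expPowerPotential
  fun_prop

lemma convexOn_expPowerPotential (hσ₁ : 0 ≤ σ₁) (hσ₂ : 0 ≤ σ₂) (hβ : 1 ≤ β) (y θ : ℝ) :
    ConvexOn ℝ univ (expPowerPotential σ₁ σ₂ β y θ) := by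
  have hterm {σ : ℝ} (hσ : 0 ≤ σ) (c : ℝ) : ConvexOn ℝ univ fun x => (|x - c| / σ) ^ β := by
    refine convexOn_rpow_comp ?_ (fun x _ => by positivity) hβ
    simpa only [Real.dist_eq, smul_eq_mul, inv_mul_eq_div] using
      (convexOn_univ_dist c).smul (inv_nonneg.mpr hσ)
  have hpotential : expPowerPotential σ₁ σ₂ β y θ =
      (fun x => (|x - y| / σ₁) ^ β) + fun x => (|x - θ| / σ₂) ^ β := by
    ext x
    rw [expPowerPotential, abs_sub_comm y, Pi.add_apply]
  exact hpotential ▸ (hterm hσ₁ y).add (hterm hσ₂ θ)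

lemma expPowerWeight_pos (hσ₁ : 0 < σ₁) (hσ₂ : 0 < σ₂) (β : ℝ) : 0 < expPowerWeight σ₁ σ₂ β := by
  unfold expPowerWeight
  positivity

lemma one_sub_expPowerWeight (hσ₁ : 0 < σ₁) (hσ₂ : 0 < σ₂) (β : ℝ) :
    1 - expPowerWeight σ₁ σ₂ β = expPowerWeight σ₂ σ₁ β := by
  rw [sub_eq_iff_eq_add', expPowerWeight, expPowerWeight, add_comm (σ₂ ^ _), ← add_div,
    div_self (by positivity)]

lemma expPowerWeight_rpow_div (hσ₁ : 0 < σ₁) (hσ₂ : 0 < σ₂) (hβ : β ≠ 1) :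
    expPowerWeight σ₁ σ₂ β ^ (β - 1) / σ₁ ^ β =
      ((σ₁ ^ (β / (β - 1)) + σ₂ ^ (β / (β - 1))) ^ (β - 1))⁻¹ := by
  rw [expPowerWeight, Real.div_rpow (by positivity) (by positivity), ← Real.rpow_mul hσ₁.le,
    div_mul_cancel₀ _ (sub_ne_zero.mpr hβ), div_right_comm, div_self (by positivity),
    one_div]

lemma expPowerWeight_balance (hσ₁ : 0 < σ₁) (hσ₂ : 0 < σ₂) (hβ : β ≠ 1) :
    expPowerWeight σ₁ σ₂ β ^ (β - 1) / σ₁ ^ β = expPowerWeight σ₂ σ₁ β ^ (β - 1) / σ₂ ^ β := by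
  rw [expPowerWeight_rpow_div hσ₁ hσ₂ hβ, expPowerWeight_rpow_div hσ₂ hσ₁ hβ, add_comm]

lemma expPowerMode_sub_left (σ₁ σ₂ β y θ : ℝ) :
    expPowerMode σ₁ σ₂ β y θ - y = expPowerWeight σ₁ σ₂ β * (θ - y) := by
  unfold expPowerMode
  ring

lemma expPowerMode_sub_right (hσ₁ : 0 < σ₁) (hσ₂ : 0 < σ₂) (β y θ : ℝ) :
    expPowerMode σ₁ σ₂ β y θ - θ = -(expPowerWeight σ₂ σ₁ β * (θ - y)) := by
  rw [← one_sub_expPowerWeight hσ₁ hσ₂, expPowerMode]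
  ring

lemma abs_mul_rpow_sub_two_mul {r : ℝ} (hr : 0 < r) (β d : ℝ) :
    |r * d| ^ (β - 2) * (r * d) = r ^ (β - 1) * (|d| ^ (β - 2) * d) := by
  rw [abs_mul, abs_of_pos hr, Real.mul_rpow hr.le (abs_nonneg d),
    show β - 1 = β - 2 + 1 by ring, Real.rpow_add_one hr.ne']
  ring

-- Up to the factor `β`, the left-hand side is the derivative of the potential at the mode.
lemma expPowerMode_stationary (hσ₁ : 0 < σ₁) (hσ₂ : 0 < σ₂) (hβ : β ≠ 1) (y θ : ℝ) :
    |expPowerMode σ₁ σ₂ β y θ - y| ^ (β - 2) * (expPowerMode σ₁ σ₂ β y θ - y) / σ₁ ^ β +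
      |expPowerMode σ₁ σ₂ β y θ - θ| ^ (β - 2) * (expPowerMode σ₁ σ₂ β y θ - θ) / σ₂ ^ β = 0 := by
  rw [expPowerMode_sub_left, expPowerMode_sub_right hσ₁ hσ₂, abs_neg, mul_neg,
    abs_mul_rpow_sub_two_mul (expPowerWeight_pos hσ₁ hσ₂ β),
    abs_mul_rpow_sub_two_mul (expPowerWeight_pos hσ₂ hσ₁ β), mul_div_right_comm,
    expPowerWeight_balance hσ₁ hσ₂ hβ]
  ring

/-- The rate `Q` of quadratic growth of the potential at the posterior mode, keeping only the
contribution of the first of the two summands. -/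
def expPowerRate (σ₁ σ₂ β y θ : ℝ) : ℝ :=
  β / 2 * |expPowerMode σ₁ σ₂ β y θ - y| ^ (β - 2) / σ₁ ^ β

lemma expPowerRate_pos (hσ₁ : 0 < σ₁) (hσ₂ : 0 < σ₂) (hβ : 0 < β) {y θ : ℝ} (hθ : θ ≠ y) :
    0 < expPowerRate σ₁ σ₂ β y θ := by
  have hmode : expPowerMode σ₁ σ₂ β y θ - y ≠ 0 := by
    rw [expPowerMode_sub_left]
    exact mul_ne_zero (expPowerWeight_pos hσ₁ hσ₂ β).ne' (sub_ne_zero.mpr hθ)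
  unfold expPowerRate
  positivity

lemma tendsto_expPowerRate_atTop (hσ₁ : 0 < σ₁) (hσ₂ : 0 < σ₂) (hβ : 2 < β) (y : ℝ) :
    Tendsto (expPowerRate σ₁ σ₂ β y) (cocompact ℝ) atTop := by
  have hdist : Tendsto (fun θ => |expPowerMode σ₁ σ₂ β y θ - y|) (cocompact ℝ) atTop := by
    simp only [expPowerMode_sub_left, abs_mul, abs_of_pos (expPowerWeight_pos hσ₁ hσ₂ β)]
    exact (tendsto_norm_sub_cocompact_atTop y).const_mul_atTop (expPowerWeight_pos hσ₁ hσ₂ β)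
  have hpow := (tendsto_rpow_atTop (by linarith : 0 < β - 2)).comp hdist
  exact (hpow.const_mul_atTop (by linarith : 0 < β / 2)).atTop_div_const
    (Real.rpow_pos_of_pos hσ₁ β)

lemma hasQuadraticGrowth_expPowerPotential (hσ₁ : 0 < σ₁) (hσ₂ : 0 < σ₂) (hβ : 2 ≤ β) (y θ : ℝ) :
    HasQuadraticGrowth (expPowerPotential σ₁ σ₂ β y θ) (expPowerMode σ₁ σ₂ β y θ)
      (expPowerRate σ₁ σ₂ β y θ) := by
  intro x
  set m := expPowerMode σ₁ σ₂ β y θ with hm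
  have hfirst := abs_div_rpow_quadratic_le hβ hσ₁ (m - y) (x - m)
  have hsecond := abs_div_rpow_quadratic_le hβ hσ₂ (m - θ) (x - m)
  have hstationary := congrArg (β * · * (x - m))
    (expPowerMode_stationary hσ₁ hσ₂ (by linarith : β ≠ 1) y θ)
  have hremainder : 0 ≤ β / 2 * |m - θ| ^ (β - 2) / σ₂ ^ β * (x - m) ^ 2 := by positivity
  simp only [← hm, mul_zero, zero_mul] at hstationary
  rw [sub_add_sub_cancel'] at hfirst hsecond
  rw [expPowerPotential, expPowerPotential, expPowerRate, ← hm, Real.norm_eq_abs, sq_abs,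
    abs_sub_comm y m, abs_sub_comm y x]
  linarith

lemma isProbabilityMeasure_expPowerPosterior (hσ₁ : 0 < σ₁) (hσ₂ : 0 < σ₂) (hβ : 2 ≤ β) {y θ : ℝ}
    (hθ : θ ≠ y) : IsProbabilityMeasure (expPowerPosterior σ₁ σ₂ β y θ) :=
  isProbabilityMeasure_tilted <|
    (hasQuadraticGrowth_expPowerPotential hσ₁ hσ₂ hβ y θ).integrable_exp_neg
      (expPowerRate_pos hσ₁ hσ₂ (by linarith) hθ)
      (measurable_expPowerPotential σ₁ σ₂ β y θ)

lemma integrable_abs_sub_expPowerMode (hσ₁ : 0 < σ₁) (hσ₂ : 0 < σ₂) (hβ : 2 ≤ β) {y θ : ℝ}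
    (hθ : θ ≠ y) :
    Integrable (fun x => |x - expPowerMode σ₁ σ₂ β y θ|) (expPowerPosterior σ₁ σ₂ β y θ) :=
  (hasQuadraticGrowth_expPowerPotential hσ₁ hσ₂ hβ y θ).integrable_norm_sub_tilted
    (expPowerRate_pos hσ₁ hσ₂ (by linarith) hθ)
    (measurable_expPowerPotential σ₁ σ₂ β y θ)

lemma integral_abs_sub_expPowerMode_le (hσ₁ : 0 < σ₁) (hσ₂ : 0 < σ₂) (hβ : 2 ≤ β) {y θ : ℝ}
    (hθ : θ ≠ y) :
    ∫ x, |x - expPowerMode σ₁ σ₂ β y θ| ∂(expPowerPosterior σ₁ σ₂ β y θ) ≤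
      4 / √(expPowerRate σ₁ σ₂ β y θ) := by
  have h := (hasQuadraticGrowth_expPowerPotential hσ₁ hσ₂ hβ y θ).integral_norm_sub_tilted_le
    (expPowerRate_pos hσ₁ hσ₂ (by linarith) hθ)
    (convexOn_expPowerPotential hσ₁.le hσ₂.le (by linarith) y θ)
  rw [Module.finrank_self, show (2 : ℝ) ^ (1 + 1) = 4 by norm_num] at h
  exact h

lemma tendsto_integral_abs_sub_expPowerMode (hσ₁ : 0 < σ₁) (hσ₂ : 0 < σ₂) (hβ : 2 < β) (y : ℝ) :
    Tendsto (fun θ => ∫ x, |x - expPowerMode σ₁ σ₂ β y θ| ∂(expPowerPosterior σ₁ σ₂ β y θ))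
      (cocompact ℝ) (nhds 0) := by
  have hbound : Tendsto (fun θ => 4 / √(expPowerRate σ₁ σ₂ β y θ)) (cocompact ℝ) (nhds 0) :=
    (Real.tendsto_sqrt_atTop.comp (tendsto_expPowerRate_atTop hσ₁ hσ₂ hβ y)).const_div_atTop 4
  refine squeeze_zero' (Eventually.of_forall fun _ => integral_nonneg fun _ => abs_nonneg _) ?_
    hbound
  filter_upwards [eventually_ne_cocompact y] with θ hθ
  exact integral_abs_sub_expPowerMode_le hσ₁ hσ₂ hβ.le hθ

lemma tendsto_expPowerPosterior_real_lt (hσ₁ : 0 < σ₁) (hσ₂ : 0 < σ₂) (hβ : 2 < β) (y : ℝ)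
    {ε : ℝ} (hε : 0 < ε) :
    Tendsto (fun θ => (expPowerPosterior σ₁ σ₂ β y θ).real
      {x | ε < |x - expPowerMode σ₁ σ₂ β y θ|}) (cocompact ℝ) (nhds 0) := by
  have (θ : ℝ) : IsFiniteMeasure (expPowerPosterior σ₁ σ₂ β y θ) := by
    unfold expPowerPosterior
    infer_instance
  refine tendsto_measureReal_lt_of_tendsto_integral (fun _ _ => abs_nonneg _) ?_
    (tendsto_integral_abs_sub_expPowerMode hσ₁ hσ₂ hβ y) hε
  filter_upwards [eventually_ne_cocompact y] with θ hθ
  exact integrable_abs_sub_expPowerMode hσ₁ hσ₂ hβ.le hθ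

lemma integral_abs_sub_expPowerPosterior_le (hσ₁ : 0 < σ₁) (hσ₂ : 0 < σ₂) (hβ : 2 ≤ β) {y θ : ℝ}
    (hθ : θ ≠ y) :
    ∫ x, |x - y| ∂(expPowerPosterior σ₁ σ₂ β y θ) ≤
      ∫ x, |x - expPowerMode σ₁ σ₂ β y θ| ∂(expPowerPosterior σ₁ σ₂ β y θ) +
        expPowerWeight σ₁ σ₂ β * |θ - y| := by
  have := isProbabilityMeasure_expPowerPosterior hσ₁ hσ₂ hβ hθ
  have h := integral_dist_le_add_dist (integrable_abs_sub_expPowerMode hσ₁ hσ₂ hβ hθ) y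
  rwa [Real.dist_eq (expPowerMode σ₁ σ₂ β y θ), expPowerMode_sub_left, abs_mul,
    abs_of_pos (expPowerWeight_pos hσ₁ hσ₂ β)] at h

lemma eventually_integral_abs_sub_expPowerPosterior_le (hσ₁ : 0 < σ₁) (hσ₂ : 0 < σ₂) (hβ : 2 < β)
    (y : ℝ) {ε : ℝ} (hε : 0 < ε) :
    ∀ᶠ θ in cocompact ℝ, ∫ x, |x - y| ∂(expPowerPosterior σ₁ σ₂ β y θ) ≤
      (1 + ε) * expPowerWeight σ₁ σ₂ β * |θ - y| := by
  have hρ := expPowerWeight_pos hσ₁ hσ₂ β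
  have hsmall := (tendsto_integral_abs_sub_expPowerMode hσ₁ hσ₂ hβ y).eventually_lt_const
    (mul_pos hε hρ)
  filter_upwards [hsmall, (tendsto_norm_sub_cocompact_atTop y).eventually_ge_atTop 1,
    eventually_ne_cocompact y] with θ hmoment hfar hθ
  rw [Real.norm_eq_abs] at hfar
  calc ∫ x, |x - y| ∂(expPowerPosterior σ₁ σ₂ β y θ)
      ≤ ∫ x, |x - expPowerMode σ₁ σ₂ β y θ| ∂(expPowerPosterior σ₁ σ₂ β y θ) +
        expPowerWeight σ₁ σ₂ β * |θ - y| :=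
        integral_abs_sub_expPowerPosterior_le hσ₁ hσ₂ hβ.le hθ
    _ ≤ ε * expPowerWeight σ₁ σ₂ β * |θ - y| + expPowerWeight σ₁ σ₂ β * |θ - y| := by
        gcongr
        exact hmoment.le.trans (le_mul_of_one_le_right (mul_pos hε hρ).le hfar)
    _ = (1 + ε) * expPowerWeight σ₁ σ₂ β * |θ - y| := by ring

end Model

/-- in the exponential-power–exponential-power model with shape `β > 2`,
setting `a = β/(β-1)` and `ρ = σ₁^a/(σ₁^a + σ₂^a)`, (i) the conditional posterior of `X`
given `Θ = θ` concentrates at `ρθ + (1 - ρ)y` as `|θ| → ∞`, and (ii) for every `ε > 0`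
there is `k > 0` with `E{|X - y| | Θ = θ} ≤ (1 + ε) ρ |θ - y|` for all `|θ| > k`. -/
theorem exponential_power_concentration (σ₁ σ₂ β y : ℝ)
    (hσ₁ : 0 < σ₁) (hσ₂ : 0 < σ₂) (hβ : 2 < β) :
    ∀ ρ : ℝ,
      ρ = σ₁ ^ (β / (β - 1)) / (σ₁ ^ (β / (β - 1)) + σ₂ ^ (β / (β - 1))) →
      (∀ ε : ℝ, 0 < ε →
        Tendsto (fun θ =>
            ∫ x in {x : ℝ | ε < |x - (ρ * θ + (1 - ρ) * y)|},
              fjoint (epD σ₁ β) (epD σ₂ β) y θ x / cnorm (epD σ₁ β) (epD σ₂ β) y θ)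
          (cocompact ℝ) (nhds 0)) ∧
      (∀ ε : ℝ, 0 < ε → ∃ k > (0 : ℝ), ∀ θ : ℝ, k < |θ| →
        (∫ x, |x - y| *
            (fjoint (epD σ₁ β) (epD σ₂ β) y θ x / cnorm (epD σ₁ β) (epD σ₂ β) y θ)) ≤
          (1 + ε) * ρ * |θ - y|) := by
  rintro _ rfl
  have hβ₀ : 0 < β := by linarith
  refine ⟨fun ε hε => ?_, fun ε hε => ?_⟩
  · simp only [setIntegral_fjoint_div_cnorm hσ₁ hσ₂ hβ₀]
    exact tendsto_expPowerPosterior_real_lt hσ₁ hσ₂ hβ y hε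
  · simp only [integral_mul_fjoint_div_cnorm hσ₁ hσ₂ hβ₀]
    exact exists_pos_forall_lt_norm_of_eventually_cocompact
      (eventually_integral_abs_sub_expPowerPosterior_le hσ₁ hσ₂ hβ y hε)
end
end
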